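/- Let p, q, s be distinct primes with p ≡ 5 (mod 8), q ≡ 3 (mod 8), s ≡ 3 (mod 4), and with p a quadratic residue mod q and a quadratic residue mod s. Then the 2-Sylow subgroup of the ideal class group of the real biquadratic field F = ℚ(√(pq), √(ps)) is isomorphic to ℤ/2ℤ × ℤ/2ℤ. -/

import Mathlib

open NumberField

/-- The real biquadratic field `F = ℚ(√(pq), √(ps))`, realized inside `ℂ`. -/
noncomputable def biquad (p q s : ℕ) : IntermediateField ℚ ℂ :=
  IntermediateField.adjoin ℚ
    {((Real.sqrt (p * q) : ℝ) : ℂ), ((Real.sqrt (p * s) : ℝ) : ℂ)}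

/-!
Let `K₁`, `K₂`, `K₃` be the quadratic subfields of `F`, generated by the square roots of `pq`, `ps`
and `qs`. The quadratic residue symbol modulo `p` of the norm of an ideal of `F` defines a genus
character `ψ` of the class group, and a suitable prime that splits completely in `F` shows that `ψ`
is not trivial. Let `l` be the ideal of `F` with `l² = (2)`.

Suppose that `I` has `2`-power order in the class group and `ψ(I) = 1`. Genus theory in the
fields `Kᵢ` makes the three relative norms of `I` principal, and local conditions at `q` and `s`
make the absolute norms of their generators agree. An explicit form of Hilbert's theorem 90 then
replaces `I` by an equivalent ideal whose square is generated by a rational integer. As every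
ramified prime other than `2` becomes, up to units, the square of an element of `F` (a consequence
of the Pell equations for `pq` and `ps`), `I` is equivalent to `1` or to `l`.

Finally `l` is not the square of a class of `2`-power order: taking norms down to `K₃` and
completing at `p` would make `2` a norm from a ramified quadratic extension of `ℚ_p`, although `2`
is not a square modulo `p`. Hence the `2`-class group is an extension of `{±1}` by the group of
order two generated by `l`, and its exponent is two.
-/

/-! ### Norm forms of quadratic extensions at a prime -/

section Legendre

variable {l : ℕ} [Fact l.Prime]

lemma intCast_zmod_ne_zero {a : ℤ} (ha : ¬ (l : ℤ) ∣ a) : (a : ZMod l) ≠ 0 := by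
  rwa [ne_eq, ZMod.intCast_zmod_eq_zero_iff_dvd]

lemma legendreSym_neg_one_of_mod_four_eq_one (hl : l % 4 = 1) : legendreSym l (-1) = 1 := by
  rw [legendreSym.at_neg_one (by rintro rfl; omega), ZMod.χ₄_nat_one_mod_four hl]

lemma legendreSym_neg_one_of_mod_four_eq_three (hl : l % 4 = 3) : legendreSym l (-1) = -1 := by
  rw [legendreSym.at_neg_one (by rintro rfl; omega), ZMod.χ₄_nat_three_mod_four hl]

lemma legendreSym_neg (a : ℤ) : legendreSym l (-a) = legendreSym l (-1) * legendreSym l a := by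
  rw [← legendreSym.mul, neg_one_mul]

lemma legendreSym_neg_pow_two {a : ℤ} (ha : ¬ (l : ℤ) ∣ a) : legendreSym l (-a) ^ 2 = 1 :=
  legendreSym.sq_one l (intCast_zmod_ne_zero (by rwa [dvd_neg]))

lemma not_isSquare_two_of_mod_eight_eq_five (hl : l % 8 = 5) : ¬ IsSquare (2 : ZMod l) := by
  rw [ZMod.exists_sq_eq_two_iff (by rintro rfl; omega)]; omega

lemma not_isSquare_neg_two_of_mod_eight_eq_five (hl : l % 8 = 5) : ¬ IsSquare (-2 : ZMod l) := by
  rw [ZMod.exists_sq_eq_neg_two_iff (by rintro rfl; omega)]; omega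

lemma legendreSym_two_of_mod_eight_eq_five (hl : l % 8 = 5) : legendreSym l 2 = -1 :=
  (legendreSym.eq_neg_one_iff l).mpr (by
    exact_mod_cast not_isSquare_two_of_mod_eight_eq_five hl)

end Legendre

section Padic

variable {l : ℕ} [Fact l.Prime]

lemma padic_norm_intCast_eq_one {a : ℤ} (ha : ¬ (l : ℤ) ∣ a) : ‖(a : ℚ_[l])‖ = 1 :=
  (Padic.norm_int_le_one a).antisymm (not_lt.mp (mt Padic.norm_intCast_lt_one_iff.mp ha))

lemma padic_norm_sq_ne_norm_prime_mul_sq {x : ℚ_[l]} (hx : x ≠ 0) (y : ℚ_[l]) :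
    ‖x‖ ^ 2 ≠ ‖(l : ℚ_[l])‖ * ‖y‖ ^ 2 := by
  have hl : (l : ℚ_[l]) ≠ 0 := by exact_mod_cast (Fact.out : l.Prime).ne_zero
  rw [← norm_pow, ← norm_pow, ← norm_mul]
  intro h
  have hy : y ≠ 0 := by
    rintro rfl
    simp [hx] at h
  rw [Padic.norm_eq_zpow_neg_valuation (pow_ne_zero 2 hx),
    Padic.norm_eq_zpow_neg_valuation (mul_ne_zero hl (pow_ne_zero 2 hy))] at h
  have hval := zpow_right_injective₀ (by exact_mod_cast (Fact.out : l.Prime).pos)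
    (by exact_mod_cast (Fact.out : l.Prime).ne_one) h
  rw [Padic.valuation_mul hl (pow_ne_zero 2 hy), Padic.valuation_pow, Padic.valuation_pow,
    Padic.valuation_p] at hval
  omega

lemma padic_norm_le_one_of_prime_mul_sq_le_one {y : ℚ_[l]} (hy : ‖(l : ℚ_[l])‖ * ‖y‖ ^ 2 ≤ 1) :
    ‖y‖ ≤ 1 := by
  have hl : (1 : ℝ) < l := by exact_mod_cast (Fact.out : l.Prime).one_lt
  rw [Padic.norm_p, inv_mul_le_iff₀ (by positivity), mul_one] at hy
  have hlt : ‖y‖ < (l : ℝ) ^ ((0 : ℤ) + 1) := by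
    rw [zero_add, zpow_one]
    nlinarith [norm_nonneg y]
  simpa using (Padic.norm_le_pow_iff_norm_lt_pow_add_one y 0).mpr hlt

lemma max_padic_norm_eq_one_of_eq_mul_sq_add {a b u : ℤ} (ha : ¬ (l : ℤ) ∣ a)
    (hb : ¬ (l : ℤ) ∣ b) (hu : ¬ (l : ℤ) ∣ u) {x y : ℚ_[l]}
    (h : (u : ℚ_[l]) = a * x ^ 2 + l * b * y ^ 2) :
    max (‖x‖ ^ 2) (‖(l : ℚ_[l])‖ * ‖y‖ ^ 2) = 1 := by
  have hax : ‖a * x ^ 2‖ = ‖x‖ ^ 2 := by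
    rw [norm_mul, padic_norm_intCast_eq_one ha, one_mul, norm_pow]
  have hby : ‖l * b * y ^ 2‖ = ‖(l : ℚ_[l])‖ * ‖y‖ ^ 2 := by
    rw [norm_mul, norm_mul, padic_norm_intCast_eq_one hb, mul_one, norm_pow]
  rw [← hax, ← hby, ← padic_norm_intCast_eq_one hu, h]
  rcases eq_or_ne x 0 with rfl | hx
  · simpa using by positivity
  · refine (IsUltrametricDist.norm_add_eq_max_of_norm_ne_norm ?_).symm
    rw [hax, hby]
    exact padic_norm_sq_ne_norm_prime_mul_sq hx y

lemma legendreSym_eq_of_padic_eq_mul_sq_add {a b u : ℤ} (ha : ¬ (l : ℤ) ∣ a) (hb : ¬ (l : ℤ) ∣ b)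
    (hu : ¬ (l : ℤ) ∣ u) {x y : ℚ_[l]} (h : (u : ℚ_[l]) = a * x ^ 2 + l * b * y ^ 2) :
    legendreSym l u = legendreSym l a := by
  have hmax := (max_padic_norm_eq_one_of_eq_mul_sq_add ha hb hu h).le
  have hx : ‖x‖ ≤ 1 :=
    (sq_le_one_iff₀ (norm_nonneg x)).mp ((le_max_left _ _).trans hmax)
  have hy : ‖y‖ ≤ 1 := padic_norm_le_one_of_prime_mul_sq_le_one ((le_max_right _ _).trans hmax)
  obtain ⟨x, rfl⟩ : ∃ z : ℤ_[l], (z : ℚ_[l]) = x := ⟨⟨x, hx⟩, rfl⟩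
  obtain ⟨y, rfl⟩ : ∃ z : ℤ_[l], (z : ℚ_[l]) = y := ⟨⟨y, hy⟩, rfl⟩
  have hlift : (u : ℤ_[l]) = a * x ^ 2 + l * b * y ^ 2 := by
    apply PadicInt.ext; push_cast; exact h
  obtain ⟨z, hz⟩ := ZMod.intCast_surjective (PadicInt.toZMod x)
  have hmod : (u : ZMod l) = ((a * z ^ 2 : ℤ) : ZMod l) := by
    simpa [hz] using congrArg (PadicInt.toZMod (p := l)) hlift
  have hz0 : (z : ZMod l) ≠ 0 := by
    intro hz0
    apply intCast_zmod_ne_zero hu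
    rw [hmod]
    push_cast
    rw [hz0]
    ring
  calc legendreSym l u = legendreSym l (a * z ^ 2) := by rw [legendreSym, legendreSym, hmod]
    _ = legendreSym l a := by rw [legendreSym.mul, legendreSym.sq_one' l hz0, mul_one]

lemma padic_norm_sq_sub_mul_sq {c : ℤ} (hc : ¬ IsSquare (c : ZMod l)) (x y : ℚ_[l]) :
    ‖x ^ 2 - c * y ^ 2‖ = max ‖x‖ ‖y‖ ^ 2 := by
  have hcu : ‖(c : ℚ_[l])‖ = 1 := padic_norm_intCast_eq_one fun h ↦ hc <| by
    rw [(ZMod.intCast_zmod_eq_zero_iff_dvd c l).mpr h]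
    exact IsSquare.zero
  have hcy : ‖c * y ^ 2‖ = ‖y‖ ^ 2 := by rw [norm_mul, hcu, one_mul, norm_pow]
  by_cases hxy : ‖x‖ = ‖y‖
  · rcases eq_or_ne y 0 with rfl | hy
    · simp
    obtain ⟨z, hz⟩ : ∃ z : ℤ_[l], (z : ℚ_[l]) = x / y :=
      ⟨⟨x / y, by rw [norm_div, hxy, div_self (norm_ne_zero_iff.mpr hy)]⟩, rfl⟩
    have hunit : ‖z ^ 2 - (c : ℤ_[l])‖ = 1 := by
      refine (PadicInt.norm_le_one _).antisymm (not_lt.mp fun hlt ↦ hc ?_)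
      have hker : z ^ 2 - (c : ℤ_[l]) ∈ RingHom.ker (PadicInt.toZMod (p := l)) := by
        rw [PadicInt.ker_toZMod, IsLocalRing.mem_maximalIdeal, PadicInt.mem_nonunits]
        exact hlt
      rw [RingHom.mem_ker, map_sub, map_pow, map_intCast, sub_eq_zero] at hker
      exact hker ▸ IsSquare.sq _
    have hfac : x ^ 2 - c * y ^ 2 = ((z ^ 2 - (c : ℤ_[l]) : ℤ_[l]) : ℚ_[l]) * y ^ 2 := by
      push_cast
      rw [hz]
      field_simp
    rw [hfac, norm_mul, PadicInt.padic_norm_e_of_padicInt, hunit, one_mul, norm_pow, hxy, max_self]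
  · have hne : ‖x ^ 2‖ ≠ ‖-(c * y ^ 2)‖ := by
      rwa [norm_neg, hcy, norm_pow, ne_eq, sq_eq_sq₀ (norm_nonneg x) (norm_nonneg y)]
    rw [sub_eq_add_neg, IsUltrametricDist.norm_add_eq_max_of_norm_ne_norm hne, norm_neg, hcy,
      norm_pow]
    exact (pow_left_monotoneOn.map_max (norm_nonneg x) (norm_nonneg y)).symm

lemma isSquare_padic_of_isSquare_zmod (hl : l ≠ 2) {n : ℤ} (hn : ¬ (l : ℤ) ∣ n)
    (hsq : IsSquare (n : ZMod l)) : IsSquare (n : ℚ_[l]) := by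
  obtain ⟨y, hy⟩ := hsq
  obtain ⟨x, rfl⟩ := ZMod.intCast_surjective y
  have hroot : ‖((x ^ 2 - n : ℤ) : ℤ_[l])‖ < 1 := by
    rw [PadicInt.norm_int_lt_one_iff_dvd, ← ZMod.intCast_zmod_eq_zero_iff_dvd]
    push_cast
    rw [hy]
    ring
  have hderiv : ‖((2 * x : ℤ) : ℤ_[l])‖ = 1 := by
    rw [PadicInt.norm_intCast_eq_padic_norm]
    refine padic_norm_intCast_eq_one ?_
    rw [← ZMod.intCast_zmod_eq_zero_iff_dvd]
    push_cast
    have : (2 : ZMod l) ≠ 0 := Ring.two_ne_zero (by rwa [ZMod.ringChar_zmod_n])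
    refine mul_ne_zero this fun hx ↦ intCast_zmod_ne_zero hn ?_
    rw [hy, hx, zero_mul]
  obtain ⟨z, hz, -⟩ := hensels_lemma (p := l) (F := Polynomial.X ^ 2 - Polynomial.C (n : ℤ_[l]))
    (a := (x : ℤ_[l])) (by
      push_cast at hroot hderiv
      simpa [Polynomial.derivative_pow, norm_mul, hderiv] using by simpa using hroot)
  have hz' : z ^ 2 = n := by simpa [sub_eq_zero] using hz
  exact ⟨z, by rw [← PadicInt.coe_intCast, ← hz']; push_cast; ring⟩

end Padic

/-- The integer `n` is a value over `K` of the norm form `x² - d y²` of `K(√d)`. -/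
def IsNormValue (K : Type*) [Field K] (d n : ℤ) : Prop :=
  ∃ x y : K, (n : K) = x ^ 2 - d * y ^ 2

namespace IsNormValue

lemma map {K L : Type*} [Field K] [Field L] {d n : ℤ} (h : IsNormValue K d n) (f : K →+* L) :
    IsNormValue L d n := by
  obtain ⟨x, y, h⟩ := h
  exact ⟨f x, f y, by simpa using congrArg f h⟩

lemma of_mul_sq {K : Type*} [Field K] {d n m : ℤ} (hm : (m : K) ≠ 0)
    (h : IsNormValue K d (n * m ^ 2)) : IsNormValue K d n := by
  obtain ⟨x, y, h⟩ := h
  refine ⟨x / m, y / m, ?_⟩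
  push_cast at h
  field_simp
  linear_combination h

variable {l : ℕ} [Fact l.Prime]

lemma legendreSym_eq {e u : ℤ} (he : ¬ (l : ℤ) ∣ e) (hu : ¬ (l : ℤ) ∣ u) {v : ℕ}
    (h : IsNormValue ℚ_[l] (l * e) (l ^ v * u)) :
    legendreSym l u = legendreSym l (-e) ^ v := by
  have hl : (l : ℤ) ≠ 0 := by exact_mod_cast (Fact.out : l.Prime).ne_zero
  have hlQ : ((l : ℤ) : ℚ_[l]) ≠ 0 := by exact_mod_cast hl
  have hl1 : ¬ (l : ℤ) ∣ 1 := by exact_mod_cast (Fact.out : l.Prime).not_dvd_one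
  obtain ⟨w, rfl | rfl⟩ := v.even_or_odd'
  · obtain ⟨x, y, h⟩ := of_mul_sq (n := u) (m := l ^ w) (by push_cast; exact pow_ne_zero _ hlQ)
      (by convert h using 1; ring)
    rw [pow_mul, legendreSym_neg_pow_two he, one_pow, ← legendreSym.at_one (p := l)]
    refine legendreSym_eq_of_padic_eq_mul_sq_add (x := x) (y := y) (b := -e) hl1
      (by rwa [dvd_neg]) hu ?_
    rw [h]
    push_cast
    ring
  · obtain ⟨x, y, h⟩ := of_mul_sq (n := l * u) (m := l ^ w) (by push_cast; exact pow_ne_zero _ hlQ)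
      (by convert h using 1; ring)
    rw [pow_succ, pow_mul, legendreSym_neg_pow_two he, one_pow, one_mul]
    refine legendreSym_eq_of_padic_eq_mul_sq_add (x := y) (y := x / l) (b := 1) (by rwa [dvd_neg])
      hl1 hu ?_
    push_cast at h hlQ ⊢
    field_simp
    linear_combination h

lemma even_of_not_isSquare {c u : ℤ} (hc : ¬ IsSquare (c : ZMod l)) (hu : ¬ (l : ℤ) ∣ u) {v : ℕ}
    (h : IsNormValue ℚ_[l] c (l ^ v * u)) : Even v := by
  obtain ⟨x, y, h⟩ := h
  push_cast at h
  have hnorm : ‖(l : ℚ_[l])‖ ^ v = max ‖x‖ ‖y‖ ^ 2 := by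
    rw [← padic_norm_sq_sub_mul_sq hc, ← h, norm_mul, padic_norm_intCast_eq_one hu, mul_one,
      norm_pow]
  have hl : ‖(l : ℚ_[l])‖ ≠ 0 := by simpa using (Fact.out : l.Prime).ne_zero
  by_contra hv
  obtain ⟨w, rfl⟩ := Nat.not_even_iff_odd.mp hv
  obtain ⟨z, hz⟩ : ∃ z : ℚ_[l], ‖z‖ = max ‖x‖ ‖y‖ := by
    rcases max_choice ‖x‖ ‖y‖ with hm | hm <;> rw [hm] <;> exact ⟨_, rfl⟩
  have hz0 : z ≠ 0 := by
    rw [← norm_ne_zero_iff]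
    intro hz0
    rw [← hz, hz0, zero_pow two_ne_zero] at hnorm
    exact pow_ne_zero _ hl hnorm
  refine padic_norm_sq_ne_norm_prime_mul_sq hz0 ((l : ℚ_[l]) ^ w) ?_
  rw [hz, ← hnorm, norm_pow]
  ring

lemma legendreSym_eq_of_rat {e u : ℤ} (he : ¬ (l : ℤ) ∣ e) (hu : ¬ (l : ℤ) ∣ u) {v : ℕ}
    (h : IsNormValue ℚ (l * e) (l ^ v * u)) : legendreSym l u = legendreSym l (-e) ^ v :=
  legendreSym_eq he hu (h.map (algebraMap ℚ ℚ_[l]))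

lemma even_of_not_isSquare_of_rat {c u : ℤ} (hc : ¬ IsSquare (c : ZMod l)) (hu : ¬ (l : ℤ) ∣ u)
    {v : ℕ} (h : IsNormValue ℚ c (l ^ v * u)) : Even v :=
  even_of_not_isSquare hc hu (h.map (algebraMap ℚ ℚ_[l]))

end IsNormValue

section Global

variable {l : ℕ} [Fact l.Prime]

lemma exists_eq_prime_pow_mul_and_not_dvd (l : ℕ) [Fact l.Prime] {n : ℤ} (hn : n ≠ 0) :
    ∃ (v : ℕ) (u : ℤ), ¬ (l : ℤ) ∣ u ∧ n = l ^ v * u := by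
  have hl : FiniteMultiplicity (l : ℤ) n :=
    Int.finiteMultiplicity_iff.mpr ⟨by simpa using (Fact.out : l.Prime).ne_one, hn⟩
  obtain ⟨u, hu, hlu⟩ := hl.exists_eq_pow_mul_and_not_dvd
  exact ⟨_, u, hlu, hu⟩

lemma not_isNormValue_neg_sq (hl : l % 4 = 3) {e : ℤ} (he : ¬ (l : ℤ) ∣ e) {n : ℤ} (hn : n ≠ 0) :
    ¬ IsNormValue ℚ (l * e) (-n ^ 2) := by
  intro h
  obtain ⟨v, u, hu, rfl⟩ := exists_eq_prime_pow_mul_and_not_dvd l hn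
  have hlp : Prime (l : ℤ) := Nat.prime_iff_prime_int.mp Fact.out
  have hres := IsNormValue.legendreSym_eq_of_rat (u := -u ^ 2) (v := 2 * v) he
    (by rw [dvd_neg]; exact mt hlp.dvd_of_dvd_pow hu) (by convert h using 1; ring)
  rw [pow_mul, legendreSym_neg_pow_two he, one_pow, legendreSym_neg,
    legendreSym.sq_one' l (intCast_zmod_ne_zero hu),
    legendreSym_neg_one_of_mod_four_eq_three hl] at hres
  omega

lemma eq_of_isNormValue_of_natAbs_eq (hl : l % 4 = 3) {a b : ℤ} (ha : ¬ (l : ℤ) ∣ a)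
    (hb : ¬ (l : ℤ) ∣ b) (hsq : IsSquare (a : ZMod l)) {n₁ n₂ n₃ : ℤ} (hn : n₁ ≠ 0)
    (h₂₁ : n₂.natAbs = n₁.natAbs) (h₃₁ : n₃.natAbs = n₁.natAbs) (h₁ : IsNormValue ℚ (l * a) n₁)
    (h₂ : IsNormValue ℚ (a * b) n₂) (h₃ : IsNormValue ℚ (l * b) n₃) : n₃ = n₁ := by
  refine (Int.natAbs_eq_natAbs_iff.mp h₃₁).resolve_right ?_
  rintro rfl
  obtain ⟨v, u, hu, rfl⟩ := exists_eq_prime_pow_mul_and_not_dvd l hn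
  have hu' : ¬ (l : ℤ) ∣ -u := by rwa [dvd_neg]
  have hla : legendreSym l a = 1 := (legendreSym.eq_one_iff l (intCast_zmod_ne_zero ha)).mpr hsq
  have hneg := legendreSym_neg_one_of_mod_four_eq_three hl
  have hres₁ := IsNormValue.legendreSym_eq_of_rat ha hu h₁
  have hres₃ := IsNormValue.legendreSym_eq_of_rat hb hu' (v := v) (by convert h₃ using 1; ring)
  rw [legendreSym_neg, hneg, hla, mul_one] at hres₁
  rw [legendreSym_neg, legendreSym_neg b, hneg, hres₁, mul_pow] at hres₃
  have hbv : legendreSym l b ^ v = -1 :=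
    mul_left_cancel₀ (pow_ne_zero v (by norm_num : (-1 : ℤ) ≠ 0)) (by linarith)
  have hlb : legendreSym l b = -1 :=
    (legendreSym.eq_one_or_neg_one l (intCast_zmod_ne_zero hb)).resolve_left fun h ↦ by
      simp [h] at hbv
  have hab : ¬ IsSquare ((a * b : ℤ) : ZMod l) := by
    rw [← legendreSym.eq_neg_one_iff, legendreSym.mul, hla, hlb, one_mul]
  have hv : Even v := by
    rcases Int.natAbs_eq_natAbs_iff.mp h₂₁ with rfl | rfl
    · exact IsNormValue.even_of_not_isSquare_of_rat hab hu h₂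
    · exact IsNormValue.even_of_not_isSquare_of_rat hab hu' (by convert h₂ using 1; ring)
  rw [hlb, hv.neg_one_pow] at hbv
  omega

/-- The genus character attached to the prime `p`: the quadratic residue symbol modulo `p` of the
prime-to-`p` part of a natural number. It is applied to norms of ideals. -/
noncomputable def genusChar (p : ℕ) [Fact p.Prime] : ℕ →* ℤ where
  toFun n := legendreSym p (ordCompl[p] n : ℕ)
  map_one' := by simp
  map_mul' m n := by rw [Nat.ordCompl_mul, Nat.cast_mul, legendreSym.mul]

variable {p : ℕ} [Fact p.Prime]

lemma genusChar_apply (n : ℕ) : genusChar p n = legendreSym p (ordCompl[p] n : ℕ) := rfl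

lemma genusChar_of_not_dvd {n : ℕ} (hn : ¬ p ∣ n) : genusChar p n = legendreSym p n := by
  rw [genusChar_apply, Nat.factorization_eq_zero_of_not_dvd hn, pow_zero, Nat.div_one]

lemma genusChar_sq {n : ℕ} (hn : n ≠ 0) : genusChar p n ^ 2 = 1 :=
  legendreSym.sq_one p <| intCast_zmod_ne_zero <| by
    exact_mod_cast Nat.not_dvd_ordCompl Fact.out hn

lemma genusChar_prime_self : genusChar p p = 1 := by
  rw [genusChar_apply, Nat.Prime.factorization_self Fact.out, pow_one,
    Nat.div_self (Fact.out : p.Prime).pos, Nat.cast_one, legendreSym.at_one]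

lemma genusChar_two (hp : p % 8 = 5) : genusChar p 2 = -1 := by
  rw [genusChar_of_not_dvd (fun h ↦ by have := Nat.le_of_dvd two_pos h; omega)]
  exact legendreSym_two_of_mod_eight_eq_five hp

lemma genusChar_natAbs_of_isNormValue (hp : p % 4 = 1) {e : ℤ} (he : ¬ (p : ℤ) ∣ e)
    (hsq : IsSquare (e : ZMod p)) {n : ℤ} (hn : n ≠ 0) (h : IsNormValue ℚ (p * e) n) :
    genusChar p n.natAbs = 1 := by
  have hneg := legendreSym_neg_one_of_mod_four_eq_one hp
  obtain ⟨v, u, hu, rfl⟩ := exists_eq_prime_pow_mul_and_not_dvd p hn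
  have hu1 : legendreSym p u = 1 := by
    rw [IsNormValue.legendreSym_eq_of_rat he hu h, legendreSym_neg, hneg, one_mul,
      (legendreSym.eq_one_iff p (intCast_zmod_ne_zero he)).mpr hsq, one_pow]
  rw [Int.natAbs_mul, Int.natAbs_pow, Int.natAbs_natCast, map_mul, map_pow, genusChar_prime_self,
    one_pow, one_mul, genusChar_of_not_dvd (by rwa [← Int.natCast_dvd])]
  rcases Int.natAbs_eq u with hu' | hu'
  · rw [← hu', hu1]
  · rw [← hu1, hu', legendreSym_neg, hneg, one_mul, Int.natAbs_neg, Int.natAbs_natCast]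

end Global

/-! ### Half-solutions of Pell equations -/

lemma exists_eq_mul_sq_of_mul_eq {d e u v w : ℤ} (hd : 0 < d) (he : 0 < e) (hu : 0 < u)
    (hv : 0 < v) (huv : IsCoprime u v) (hdu : d ∣ u) (hev : e ∣ v) (h : u * v = d * e * w ^ 2) :
    ∃ r t : ℤ, u = d * r ^ 2 ∧ v = e * t ^ 2 := by
  obtain ⟨u, rfl⟩ := hdu
  obtain ⟨v, rfl⟩ := hev
  have hu' : 0 < u := pos_of_mul_pos_right hu hd.le
  have hv' : 0 < v := pos_of_mul_pos_right hv he.le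
  have huv' : IsCoprime u v := huv.of_mul_left_right.of_mul_right_right
  have hsq : u * v = w ^ 2 :=
    mul_left_cancel₀ (mul_pos hd he).ne' (by linear_combination h)
  obtain ⟨r, hr⟩ := Int.sq_of_isCoprime huv' hsq
  obtain ⟨t, ht⟩ := Int.sq_of_isCoprime huv'.symm ((mul_comm v u).trans hsq)
  exact ⟨r, t, by rw [hr.resolve_right (by nlinarith [sq_nonneg r])],
    by rw [ht.resolve_right (by nlinarith [sq_nonneg t])]⟩

lemma odd_x_of_pell_of_mul_mod_four_eq_one {P Q : ℕ} (hPQ : P * Q % 4 = 1)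
    {x y : ℤ} (h : x ^ 2 - P * Q * y ^ 2 = 1) : Odd x := by
  rw [← Int.not_even_iff_odd]
  rintro ⟨m, rfl⟩
  obtain ⟨k, hk⟩ : ∃ k : ℤ, (P : ℤ) * Q = 4 * k + 1 := ⟨(P * Q / 4 : ℕ), by push_cast; omega⟩
  rw [hk] at h
  rcases y.even_or_odd' with ⟨w, rfl | rfl⟩ <;> ring_nf at h <;> omega

section PellHalf

variable {P Q : ℕ} [hP : Fact P.Prime] [hQ : Fact Q.Prime]

lemma exists_of_mul_eq_prime_mul_prime_mul_sq (hPQ : P ≠ Q) {u v w : ℤ} (hu : 0 < u) (hv : 0 < v)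
    (huv : IsCoprime u v) (h : u * v = P * Q * w ^ 2) :
    ∃ r t : ℤ, (u = P * r ^ 2 ∧ v = Q * t ^ 2) ∨ (u = Q * r ^ 2 ∧ v = P * t ^ 2) ∨
      (u = P * Q * r ^ 2 ∧ v = t ^ 2) ∨ (u = r ^ 2 ∧ v = P * Q * t ^ 2) := by
  have hP0 : (0 : ℤ) < P := by exact_mod_cast hP.out.pos
  have hQ0 : (0 : ℤ) < Q := by exact_mod_cast hQ.out.pos
  have hcop : IsCoprime (P : ℤ) Q :=
    Nat.isCoprime_iff_coprime.mpr ((Nat.coprime_primes hP.out hQ.out).mpr hPQ)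
  have hPuv : (P : ℤ) ∣ u ∨ (P : ℤ) ∣ v :=
    (Nat.prime_iff_prime_int.mp hP.out).dvd_or_dvd ⟨Q * w ^ 2, by rw [h]; ring⟩
  have hQuv : (Q : ℤ) ∣ u ∨ (Q : ℤ) ∣ v :=
    (Nat.prime_iff_prime_int.mp hQ.out).dvd_or_dvd ⟨P * w ^ 2, by rw [h]; ring⟩
  rcases hPuv with hPu | hPv <;> rcases hQuv with hQu | hQv
  · obtain ⟨r, t, hr, ht⟩ := exists_eq_mul_sq_of_mul_eq (w := w) (mul_pos hP0 hQ0) one_pos hu hv huv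
      (hcop.mul_dvd hPu hQu) (one_dvd v) (by linear_combination h)
    exact ⟨r, t, .inr (.inr (.inl ⟨hr, ht.trans (one_mul _)⟩))⟩
  · obtain ⟨r, t, hr, ht⟩ := exists_eq_mul_sq_of_mul_eq hP0 hQ0 hu hv huv hPu hQv h
    exact ⟨r, t, .inl ⟨hr, ht⟩⟩
  · obtain ⟨r, t, hr, ht⟩ := exists_eq_mul_sq_of_mul_eq (w := w) hQ0 hP0 hu hv huv hQu hPv
      (by linear_combination h)
    exact ⟨r, t, .inr (.inl ⟨hr, ht⟩)⟩
  · obtain ⟨r, t, hr, ht⟩ := exists_eq_mul_sq_of_mul_eq (w := w) one_pos (mul_pos hP0 hQ0) hu hv huv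
      (one_dvd u) (hcop.mul_dvd hPv hQv) (by linear_combination h)
    exact ⟨r, t, .inr (.inr (.inr ⟨hr.trans (one_mul _), ht⟩))⟩

lemma odd_x_of_pell_of_isSquare (hPQ : P ≠ Q) (hP8 : P % 8 = 5) (hsq : IsSquare (Q : ZMod P))
    {x y : ℤ} (hx : 1 < x) (h : x ^ 2 - P * Q * y ^ 2 = 1) : Odd x := by
  rw [← Int.not_even_iff_odd]
  rintro ⟨m, rfl⟩
  have hcop : IsCoprime (m + m + 1) (m + m - 1) := ⟨-m + 1, m, by ring⟩
  have htwo := not_isSquare_two_of_mod_eight_eq_five hP8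
  have hneg_two := not_isSquare_neg_two_of_mod_eight_eq_five hP8
  have hmod : ∀ {a b : ℤ}, a = b → (a : ZMod P) = b := congrArg _
  obtain ⟨r, t, ⟨hr, ht⟩ | ⟨hr, ht⟩ | ⟨hr, ht⟩ | ⟨hr, ht⟩⟩ :=
    exists_of_mul_eq_prime_mul_prime_mul_sq hPQ (by omega) (by omega) hcop
      (show (m + m + 1) * (m + m - 1) = P * Q * y ^ 2 by linear_combination h)
  all_goals
    have hr' := hmod hr
    have ht' := hmod ht
    push_cast [CharP.cast_eq_zero, zero_mul] at hr' ht'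
  · apply hneg_two
    rw [show (-2 : ZMod P) = Q * t ^ 2 by linear_combination ht' - hr']
    exact hsq.mul (.sq _)
  · apply htwo
    rw [show (2 : ZMod P) = Q * r ^ 2 by linear_combination hr' - ht']
    exact hsq.mul (.sq _)
  · exact hneg_two ⟨t, by linear_combination ht' - hr'⟩
  · exact htwo ⟨r, by linear_combination hr' - ht'⟩

/-- Writing `x = 2m + 1` in the fundamental solution, `m (m + 1) = PQw²`; the two splittings that do
not give a half-solution contradict minimality of `x` and `Q ≡ 3 (mod 4)`. -/
lemma exists_isUnit_of_isFundamental_of_odd (hPQ : P ≠ Q) (hPQ2 : Odd (P * Q)) (hQ4 : Q % 4 = 3)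
    {f : Pell.Solution₁ ((P * Q : ℕ) : ℤ)} (hf : Pell.IsFundamental f) (hodd : Odd f.x) :
    ∃ a b : ℤ, IsUnit (P * a ^ 2 - Q * b ^ 2) := by
  have hprop := f.prop
  have hx1 : 1 < f.x := hf.1
  push_cast at hprop
  obtain ⟨m, hm⟩ := hodd
  obtain ⟨w, hw⟩ : Even f.y := by
    have hodd : Odd ((P : ℤ) * Q) := by exact_mod_cast hPQ2
    have heven : Even (P * Q * f.y ^ 2) := ⟨2 * (m ^ 2 + m), by rw [hm] at hprop; linarith⟩
    rw [Int.even_mul, ← Int.not_odd_iff_even] at heven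
    exact (Int.even_pow.mp (heven.resolve_left (not_not.mpr hodd))).1
  have hmm : m * (m + 1) = P * Q * w ^ 2 := by
    rw [hm, hw] at hprop
    linarith
  obtain ⟨r, t, ⟨hr, ht⟩ | ⟨hr, ht⟩ | ⟨hr, ht⟩ | ⟨hr, ht⟩⟩ :=
    exists_of_mul_eq_prime_mul_prime_mul_sq hPQ (by omega) (by omega)
      (⟨-1, 1, by ring⟩ : IsCoprime m (m + 1)) hmm
  · exact ⟨r, t, by rw [← hr, ← ht, sub_add_cancel_left]; exact isUnit_one.neg⟩
  · exact ⟨t, r, by rw [← hr, ← ht, add_sub_cancel_left]; exact isUnit_one⟩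
  · exfalso
    have htabs : |t| ^ 2 = m + 1 := by rw [sq_abs, ht]
    have hlt : 1 < |t| := by nlinarith [abs_nonneg t]
    have hle := hf.x_le_x (a := .mk |t| r (by push_cast; linarith)) (by simpa using hlt)
    rw [Pell.Solution₁.x_mk] at hle
    nlinarith
  · exfalso
    have hsq : IsSquare (-1 : ZMod Q) := by
      refine ⟨r, ?_⟩
      have hmod := congrArg (Int.cast : ℤ → ZMod Q) (hr ▸ ht)
      push_cast [CharP.cast_eq_zero, mul_zero, zero_mul] at hmod
      linear_combination -hmod
    exact ZMod.exists_sq_eq_neg_one_iff.mp hsq hQ4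

lemma not_isSquare_mul_of_prime_ne (hPQ : P ≠ Q) : ¬ IsSquare (P * Q) := by
  rintro ⟨r, hr⟩
  have hsqf : Squarefree (P * Q) :=
    (Nat.squarefree_mul ((Nat.coprime_primes hP.out hQ.out).mpr hPQ)).mpr
      ⟨hP.out.squarefree, hQ.out.squarefree⟩
  have hr1 : r = 1 := Nat.isUnit_iff.mp (hsqf r (hr ▸ dvd_rfl))
  exact hP.out.ne_one (Nat.eq_one_of_mul_eq_one_right (by rw [hr, hr1]))

lemma exists_isUnit_mul_sq_sub_mul_sq (hPQ : P ≠ Q) (hP2 : P % 2 = 1) (hQ4 : Q % 4 = 3)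
    (h : P * Q % 4 = 1 ∨ (P % 8 = 5 ∧ IsSquare (Q : ZMod P))) :
    ∃ a b : ℤ, IsUnit (P * a ^ 2 - Q * b ^ 2) := by
  obtain ⟨f, hf⟩ := Pell.IsFundamental.exists_of_not_isSquare
    (d := ((P * Q : ℕ) : ℤ)) (by exact_mod_cast mul_pos hP.out.pos hQ.out.pos)
    (Int.isSquare_natCast_iff.not.mpr (not_isSquare_mul_of_prime_ne hPQ))
  have hprop : f.x ^ 2 - P * Q * f.y ^ 2 = 1 := by exact_mod_cast f.prop
  refine exists_isUnit_of_isFundamental_of_odd hPQ ?_ hQ4 hf ?_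
  · exact Nat.odd_mul.mpr ⟨Nat.odd_iff.mpr hP2, Nat.odd_iff.mpr (by omega)⟩
  · rcases h with h | ⟨hP8, hsq⟩
    · exact odd_x_of_pell_of_mul_mod_four_eq_one h hprop
    · exact odd_x_of_pell_of_isSquare hPQ hP8 hsq hf.1 hprop

end PellHalf

/-! ### Conjugation in quadratic ring extensions -/

section QuadraticConj

open nonZeroDivisors

attribute [local instance] FractionRing.liftAlgebra FractionRing.isScalarTower_liftAlgebra

lemma dvd_of_algebraMap_dvd_algebraMap {R S : Type*} [CommRing R] [IsDomain R]
    [IsIntegrallyClosed R] [CommRing S] [IsDomain S] [Algebra R S] [Algebra.IsIntegral R S]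
    [Module.IsTorsionFree R S] {a b : R} (h : algebraMap R S a ∣ algebraMap R S b) : a ∣ b := by
  have hinj := FaithfulSMul.algebraMap_injective R S
  rcases eq_or_ne a 0 with rfl | ha
  · rw [map_zero, zero_dvd_iff, map_eq_zero_iff _ hinj] at h
    exact h ▸ dvd_rfl
  obtain ⟨c, hc⟩ := h
  let K := FractionRing R
  let L := FractionRing S
  have haK : algebraMap R K a ≠ 0 :=
    (map_ne_zero_iff _ (FaithfulSMul.algebraMap_injective R K)).mpr ha
  have hquot : algebraMap K L (algebraMap R K b / algebraMap R K a) = algebraMap S L c := by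
    rw [map_div₀, div_eq_iff ((map_ne_zero _).mpr haK)]
    simp only [← IsScalarTower.algebraMap_apply]
    rw [IsScalarTower.algebraMap_apply R S L b, hc, map_mul, ← IsScalarTower.algebraMap_apply,
      mul_comm]
  have hintegral : IsIntegral R (algebraMap R K b / algebraMap R K a) := by
    rw [← isIntegral_algebraMap_iff (B := L) (algebraMap K L).injective, hquot]
    exact (Algebra.IsIntegral.isIntegral (R := R) c).algebraMap
  obtain ⟨z, hz⟩ := IsIntegrallyClosed.isIntegral_iff.mp hintegral
  rw [eq_div_iff haK, ← map_mul] at hz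
  exact ⟨z, by rw [mul_comm, FaithfulSMul.algebraMap_injective R K hz]⟩

/-- `σ` is the conjugation of an extension `S / R` of rank two. For Dedekind domains of
characteristic zero this is the nontrivial element of the Galois group of the fraction fields. -/
structure IsQuadraticConj {R S : Type*} [CommRing R] [CommRing S] [Algebra R S]
    (σ : S ≃ₐ[R] S) : Prop where
  finrank_eq_two : Module.finrank R S = 2
  ne_one : σ ≠ 1

namespace IsQuadraticConj

variable {R S : Type*} [CommRing R] [CommRing S] [Algebra R S] [IsDedekindDomain R]
  [IsDedekindDomain S] [Module.Finite R S] [Module.IsTorsionFree R S] [CharZero R]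
  {σ : S ≃ₐ[R] S}

lemma isGalois_fractionRing (hσ : IsQuadraticConj σ) :
    IsGalois (FractionRing R) (FractionRing S) := by
  have : Algebra.IsQuadraticExtension (FractionRing R) (FractionRing S) :=
    ⟨(IsFractionRing.finrank_eq R (FractionRing R) S (FractionRing S)).trans hσ.finrank_eq_two⟩
  infer_instance

lemma card_algEquiv (hσ : IsQuadraticConj σ) : Nat.card (S ≃ₐ[R] S) = 2 := by
  have : IsIntegralClosure S R (FractionRing S) := .of_isIntegrallyClosed _ _ _
  have : FiniteDimensional (FractionRing R) (FractionRing S) := .of_isLocalization R S R⁰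
  have := hσ.isGalois_fractionRing
  rw [← Nat.card_congr (galRestrict R (FractionRing R) (FractionRing S) S).toEquiv,
    IsGalois.card_aut_eq_finrank, IsFractionRing.finrank_eq R _ S, hσ.finrank_eq_two]

lemma eq_one_or_eq (hσ : IsQuadraticConj σ) (ρ : S ≃ₐ[R] S) : ρ = 1 ∨ ρ = σ := by
  obtain ⟨τ, -, hτ⟩ := (Nat.card_eq_two_iff' (1 : S ≃ₐ[R] S)).mp hσ.card_algEquiv
  rw [hτ σ hσ.ne_one]
  exact or_iff_not_imp_left.mpr (hτ ρ)

lemma apply_apply (hσ : IsQuadraticConj σ) (x : S) : σ (σ x) = x := by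
  have hsq : σ ^ 2 = 1 := hσ.card_algEquiv ▸ pow_card_eq_one'
  exact (sq σ ▸ DFunLike.congr_fun hsq x :)

lemma algebraMap_intNorm (hσ : IsQuadraticConj σ) (x : S) :
    algebraMap R S (Algebra.intNorm R S x) = x * σ x := by
  classical
  have := hσ.isGalois_fractionRing
  have huniv : (Finset.univ : Finset (S ≃ₐ[R] S)) = {1, σ} := by
    ext ρ
    simpa using hσ.eq_one_or_eq ρ
  rw [Algebra.algebraMap_intNorm_of_isGalois, huniv, Finset.prod_pair hσ.ne_one.symm]
  rfl

lemma exists_algebraMap_eq (hσ : IsQuadraticConj σ) {x : S} (hx : σ x = x) :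
    ∃ a, algebraMap R S a = x := by
  let K := FractionRing R
  let L := FractionRing S
  have : IsIntegralClosure S R L := .of_isIntegrallyClosed _ _ _
  have : FiniteDimensional K L := .of_isLocalization R S R⁰
  have : IsGalois K L := hσ.isGalois_fractionRing
  obtain ⟨y, hy⟩ := (IsGalois.mem_range_algebraMap_iff_fixed (F := K) (algebraMap S L x)).mpr
    fun ρ ↦ by
      rw [← algebraMap_galRestrict_apply R ρ x]
      rcases hσ.eq_one_or_eq (galRestrict R K L S ρ) with h | h <;> rw [h]
      · rfl
      · rw [hx]
  have hintegral : IsIntegral R y := by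
    rw [← isIntegral_algebraMap_iff (B := L) (algebraMap K L).injective, hy]
    exact (Algebra.IsIntegral.isIntegral (R := R) x).algebraMap
  obtain ⟨a, rfl⟩ := IsIntegrallyClosed.isIntegral_iff.mp hintegral
  refine ⟨a, FaithfulSMul.algebraMap_injective S L ?_⟩
  rw [← hy, ← IsScalarTower.algebraMap_apply, ← IsScalarTower.algebraMap_apply]

lemma apply_add_apply (hσ : IsQuadraticConj σ) (w : S) : σ (w + σ w) = w + σ w := by
  rw [map_add, hσ.apply_apply, add_comm]

lemma apply_sub_apply_mul (hσ : IsQuadraticConj σ) {x : S} (hx : σ x = -x) (w : S) :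
    σ ((w - σ w) * x) = (w - σ w) * x := by
  rw [map_mul, map_sub, hσ.apply_apply, hx]
  ring

lemma map_mem_subfield (hσ : IsQuadraticConj σ) {k : Type*} [Field k] (h2 : (2 : k) ≠ 0)
    {M : Subfield k} (f : S →+* k) (hM : ∀ a, f (algebraMap R S a) ∈ M) {x : S} (hx : σ x = -x)
    (hxM : f x ∈ M) (hx0 : f x ≠ 0) (w : S) : f w ∈ M := by
  have hfixed {v : S} (hv : σ v = v) : f v ∈ M := by
    obtain ⟨a, rfl⟩ := hσ.exists_algebraMap_eq hv
    exact hM a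
  have hw : f w = (f x * f (w + σ w) + f ((w - σ w) * x)) / (2 * f x) := by
    rw [eq_div_iff (mul_ne_zero h2 hx0)]
    simp only [map_add, map_mul, map_sub]
    ring
  rw [hw]
  exact M.div_mem (M.add_mem (M.mul_mem hxM (hfixed (hσ.apply_add_apply w)))
    (hfixed (hσ.apply_sub_apply_mul hx w))) (M.mul_mem (ofNat_mem M 2) hxM)

lemma exists_map_intNorm_eq (hσ : IsQuadraticConj σ) {x : S} (hx : σ x = -x) {d : R}
    (hxd : x ^ 2 = algebraMap R S d) {K : Type*} [Field K] [CharZero K] (φ : R →+* K)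
    (hd : φ d ≠ 0) (w : S) : ∃ X Y : K, φ (Algebra.intNorm R S w) = X ^ 2 - φ d * Y ^ 2 := by
  obtain ⟨a, ha⟩ := hσ.exists_algebraMap_eq (hσ.apply_add_apply w)
  obtain ⟨b, hb⟩ := hσ.exists_algebraMap_eq (hσ.apply_sub_apply_mul hx w)
  have hn := hσ.algebraMap_intNorm w
  generalize Algebra.intNorm R S w = n at hn ⊢
  have hnorm : 4 * d * n = d * a ^ 2 - b ^ 2 := by
    apply FaithfulSMul.algebraMap_injective R S
    simp only [map_sub, map_mul, map_pow, map_ofNat, ha, hb, hn, ← hxd]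
    ring
  have hφ := congrArg φ hnorm
  simp only [map_sub, map_mul, map_pow, map_ofNat] at hφ
  refine ⟨φ a / 2, φ b / (2 * φ d), ?_⟩
  field_simp
  linear_combination hφ

lemma map_relNorm (hσ : IsQuadraticConj σ) (I : Ideal S) :
    (Ideal.relNorm R I).map (algebraMap R S) = I * I.map σ := by
  rcases eq_or_ne I ⊥ with rfl | hI
  · simp [Ideal.map_bot]
  have hle : (Ideal.relNorm R I).map (algebraMap R S) ≤ I * I.map σ := by
    rw [Ideal.map_relNorm, Ideal.span_le]
    rintro _ ⟨x, hx, rfl⟩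
    simp only [Function.comp_apply, hσ.algebraMap_intNorm]
    exact Ideal.mul_mem_mul hx (Ideal.mem_map_of_mem _ hx)
  obtain ⟨J, hJ⟩ := Ideal.dvd_iff_le.mpr hle
  have hJ' := congrArg (Ideal.relNorm R) hJ
  rw [Ideal.relNorm_algebraMap, map_mul, map_mul, Ideal.relNorm_map_algEquiv,
    hσ.finrank_eq_two, ← sq] at hJ'
  have hne : Ideal.relNorm R I ^ 2 ≠ 0 := pow_ne_zero 2 (Ideal.relNorm_eq_bot_iff.not.mpr hI)
  have hJ1 : Ideal.relNorm R J = ⊤ := mul_left_cancel₀ hne (by rw [← hJ', Ideal.mul_top])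
  have hJtop := Ideal.relNorm_le_comap R J
  rw [hJ1, top_le_iff, Ideal.comap_eq_top_iff] at hJtop
  rw [hJ, hJtop, Ideal.mul_top]

lemma mul_map_of_relNorm_eq_span (hσ : IsQuadraticConj σ) {I : Ideal S} {a : R}
    (h : Ideal.relNorm R I = Ideal.span {a}) :
    I * I.map σ = Ideal.span {algebraMap R S a} := by
  rw [← hσ.map_relNorm, h, Ideal.map_span, Set.image_singleton]

lemma isRadical_algebraMap (hσ : IsQuadraticConj σ) {a D : R} (ha : IsRadical a) {y : S}
    (hy : (y - σ y) ^ 2 = algebraMap R S D) (hcop : IsCoprime a D) :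
    IsRadical (algebraMap R S a) := by
  rw [isRadical_iff_pow_one_lt 2 one_lt_two]
  have htrace : ∀ v, algebraMap R S a ∣ v ^ 2 → algebraMap R S a ∣ v + σ v := by
    intro v hv
    obtain ⟨t, ht⟩ := hσ.exists_algebraMap_eq (hσ.apply_add_apply v)
    have hv' : algebraMap R S a ∣ σ v ^ 2 := by simpa using map_dvd σ hv
    have hcube : algebraMap R S a ∣ algebraMap R S (t ^ 3) := by
      have hexp : (v + σ v) ^ 3 = v ^ 2 * (v + 3 * σ v) + σ v ^ 2 * (3 * v + σ v) := by ring
      rw [map_pow, ht, hexp]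
      exact dvd_add (hv.mul_right _) (hv'.mul_right _)
    rw [← ht]
    exact map_dvd _ (ha 3 t (dvd_of_algebraMap_dvd_algebraMap hcube))
  intro w hw
  have hw₁ := htrace w hw
  have hw₂ := htrace (w * y) (by rw [mul_pow]; exact hw.mul_right _)
  have hwD : algebraMap R S a ∣ algebraMap R S D * w := by
    have hexp : algebraMap R S D * w =
        ((w * y + σ (w * y)) - σ y * (w + σ w)) * (y - σ y) := by
      rw [← hy, map_mul]
      ring
    rw [hexp]
    exact (dvd_sub hw₂ (hw₁.mul_left _)).mul_right _
  exact (hcop.map (algebraMap R S)).dvd_of_dvd_mul_left hwD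

/-- Hilbert 90: `t = n + σ α` works unless it vanishes, in which case `α = -n`. -/
lemma exists_mul_sq_eq_algebraMap (hσ : IsQuadraticConj σ) {α : S} {n : R} (hα : α ≠ 0)
    (h : α * σ α = algebraMap R S (n ^ 2)) :
    ∃ t, t ≠ 0 ∧ ∃ m, m ≠ 0 ∧ α * t ^ 2 = algebraMap R S m := by
  suffices ∃ t, t ≠ 0 ∧ ∃ m, α * t ^ 2 = algebraMap R S m by
    obtain ⟨t, ht, m, hm⟩ := this
    refine ⟨t, ht, m, ?_, hm⟩
    rintro rfl
    rw [map_zero] at hm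
    exact mul_ne_zero hα (pow_ne_zero 2 ht) hm
  rcases eq_or_ne (algebraMap R S n + σ α) 0 with ht | ht
  · have hα' := congrArg σ (eq_neg_of_add_eq_zero_right ht)
    rw [hσ.apply_apply, map_neg, AlgEquiv.commutes] at hα'
    exact ⟨1, one_ne_zero, -n, by rw [hα', one_pow, mul_one, map_neg]⟩
  · obtain ⟨m, hm⟩ := hσ.exists_algebraMap_eq (x := α * (algebraMap R S n + σ α) ^ 2) (by
      rw [map_pow] at h
      simp only [map_mul, map_pow, map_add, AlgEquiv.commutes, hσ.apply_apply]
      linear_combination (α - σ α) * h)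
    exact ⟨_, ht, m, hm.symm⟩

end IsQuadraticConj

end QuadraticConj

/-! ### Ideals whose square is generated by an integer -/

section IdealSquares

variable {O : Type*} [CommRing O]

lemma exists_span_sq_eq_span_of_isUnit {x : O} {P Q a b : ℤ} (hx : x ^ 2 = P * Q)
    (hab : IsUnit (P * a ^ 2 - Q * b ^ 2)) :
    ∃ γ : O, Ideal.span {γ} ^ 2 = Ideal.span {(P : O)} := by
  have hunit : IsUnit ((P * a ^ 2 + Q * b ^ 2 : O) + 2 * a * b * x) := by
    refine isUnit_of_mul_isUnit_left (y := (P * a ^ 2 + Q * b ^ 2 : O) - 2 * a * b * x) ?_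
    convert (hab.map (Int.castRingHom O)).pow 2 using 1
    simp only [eq_intCast]
    push_cast
    linear_combination (-4 * a ^ 2 * b ^ 2 : O) * hx
  refine ⟨P * a + b * x, ?_⟩
  have hsq : (P * a + b * x) ^ 2 = P * ((P * a ^ 2 + Q * b ^ 2 : O) + 2 * a * b * x) := by
    linear_combination (b ^ 2 : O) * hx
  rw [Ideal.span_singleton_pow, hsq, Ideal.span_singleton_mul_right_unit hunit]

lemma span_two_one_add_sq {x : O} {d : ℤ} (hx : x ^ 2 = d) (hd : d % 4 = 3) :
    Ideal.span {2, 1 + x} ^ 2 = Ideal.span {(2 : O)} := by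
  obtain ⟨k, rfl⟩ : ∃ k : ℤ, d = 4 * k + 3 := ⟨d / 4, by omega⟩
  push_cast at hx
  have hlast : (1 + x) * (1 + x) = 2 * (2 * k + 2 + x) := by linear_combination hx
  have htwo : (2 : O) = 2 * (1 + x) - (1 + x) * (1 + x) + (k + 1) * (2 * 2) := by
    linear_combination hx
  rw [sq, Ideal.span_pair_mul_span_pair]
  apply le_antisymm
  · rw [Ideal.span_le]
    rintro _ (rfl | rfl | rfl | rfl) <;> rw [SetLike.mem_coe, Ideal.mem_span_singleton]
    · exact dvd_mul_right _ _
    · exact dvd_mul_right _ _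
    · exact dvd_mul_left _ _
    · exact hlast ▸ dvd_mul_right _ _
  · rw [Ideal.span_singleton_le_iff_mem]
    have hmem : ∀ w ∈ ({2 * 2, 2 * (1 + x), (1 + x) * 2, (1 + x) * (1 + x)} : Set O),
        w ∈ Ideal.span {2 * 2, 2 * (1 + x), (1 + x) * 2, (1 + x) * (1 + x)} :=
      fun w hw ↦ Ideal.subset_span hw
    have hsum := add_mem
      (sub_mem (hmem (2 * (1 + x)) (by simp)) (hmem ((1 + x) * (1 + x)) (by simp)))
      (Ideal.mul_mem_left _ (k + 1 : O) (hmem (2 * 2) (by simp)))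
    rwa [← htwo] at hsum

lemma isPrincipal_of_mul_span_eq_span [IsDomain O] {I : Ideal O} {t g : O} (ht : t ≠ 0)
    (h : I * Ideal.span {t} = Ideal.span {g}) : I.IsPrincipal := by
  obtain ⟨c, rfl⟩ : t ∣ g := by
    rw [← Ideal.span_singleton_le_span_singleton, ← h]
    exact Ideal.mul_le_right
  rw [mul_comm, ← Ideal.span_singleton_mul_span_singleton] at h
  exact ⟨c, (Ideal.span_singleton_mul_right_inj ht).mp h⟩

lemma isPrincipal_or_of_mem_sup_powers {l J : Ideal O} {a : O} (hl : l ^ 2 = Ideal.span {a})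
    (hJ : J ∈ Ideal.isPrincipalSubmonoid O ⊔ Submonoid.powers l) :
    J.IsPrincipal ∨ ∃ g, J = Ideal.span {g} * l := by
  obtain ⟨_, ⟨g, rfl⟩, _, ⟨n, rfl⟩, rfl⟩ := Submonoid.mem_sup.mp hJ
  rcases n.even_or_odd' with ⟨k, rfl | rfl⟩
  · exact .inl ⟨g * a ^ k, by
      simp [pow_mul, hl, Ideal.span_singleton_pow, Ideal.span_singleton_mul_span_singleton]⟩
  · exact .inr ⟨g * a ^ k, by
      simp [pow_add, pow_mul, hl, Ideal.span_singleton_pow,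
        ← Ideal.span_singleton_mul_span_singleton, mul_assoc]⟩

lemma dvd_of_isRadical_of_sq_eq_span {B : Ideal O} {r m : O} (hr : IsRadical r) (hrm : r ∣ m)
    (hB : B ^ 2 = Ideal.span {m}) : r ^ 2 ∣ m := by
  have hle : B ≤ Ideal.span {r} := fun w hw ↦ Ideal.mem_span_singleton.mpr <| hr 2 w <| by
    have hw2 := Ideal.pow_mem_pow hw 2
    rw [hB, Ideal.mem_span_singleton] at hw2
    exact hrm.trans hw2
  rw [← Ideal.span_singleton_le_span_singleton, ← hB, ← Ideal.span_singleton_pow]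
  exact Ideal.pow_right_mono hle 2

variable [IsDedekindDomain O]

lemma exists_eq_mul_of_sq_eq_span_mul {B C : Ideal O} {c m : O} (hc : c ≠ 0)
    (hC : C ^ 2 = Ideal.span {c}) (hB : B ^ 2 = Ideal.span {c * m}) :
    ∃ B', B = C * B' ∧ B' ^ 2 = Ideal.span {m} := by
  rw [← Ideal.span_singleton_mul_span_singleton, ← hC] at hB
  obtain ⟨B', rfl⟩ : C ∣ B := (UniqueFactorizationMonoid.pow_dvd_pow_iff_dvd two_ne_zero).mp
    (hB ▸ dvd_mul_right _ _)
  have hC0 : C ^ 2 ≠ 0 := by rwa [hC, ne_eq, Ideal.zero_eq_bot, Ideal.span_singleton_eq_bot]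
  exact ⟨B', rfl, mul_left_cancel₀ hC0 (by rw [← mul_pow, hB])⟩

/-- Primes that stay radical contribute their square to `m`, hence only an integral factor to `B`;
each of the remaining primes contributes a known square root. -/
lemma mem_of_sq_eq_span_intCast [CharZero O] [Algebra.IsIntegral ℤ O]
    {T : Submonoid (Ideal O × ℤ)} (hneg : (1, -1) ∈ T)
    (hsq : ∀ r : ℕ, r.Prime → (Ideal.span {(r : O)}, (r : ℤ) ^ 2) ∈ T)
    (hT : ∀ r : ℕ, r.Prime →
      IsRadical (r : O) ∨ ∃ C, C ^ 2 = Ideal.span {(r : O)} ∧ (C, (r : ℤ)) ∈ T)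
    {m : ℤ} (hm : m ≠ 0) {B : Ideal O} (hB : B ^ 2 = Ideal.span {(m : O)}) : (B, m) ∈ T := by
  induction hn : m.natAbs using Nat.strong_induction_on generalizing m B with
  | _ n ih =>
  subst hn
  have peel {C : Ideal O} {c : ℤ} (hc : 1 < c.natAbs) (hcm : c ∣ m)
      (hC : C ^ 2 = Ideal.span {(c : O)}) (hCT : (C, c) ∈ T) : (B, m) ∈ T := by
    obtain ⟨m', rfl⟩ := hcm
    obtain ⟨hc0, hm'⟩ := mul_ne_zero_iff.mp hm
    rw [Int.cast_mul] at hB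
    obtain ⟨B', rfl, hB'⟩ := exists_eq_mul_of_sq_eq_span_mul (Int.cast_ne_zero.mpr hc0) hC hB
    have hlt : m'.natAbs < (c * m').natAbs := by
      rw [Int.natAbs_mul]
      exact lt_mul_of_one_lt_left (Int.natAbs_pos.mpr hm') hc
    rw [← Prod.mk_mul_mk]
    exact mul_mem hCT (ih _ hlt hm' hB' rfl)
  by_cases h1 : m.natAbs = 1
  · have hB1 : B = 1 := by
      have hu : IsUnit (m : O) := by
        simpa using (Int.isUnit_iff_natAbs_eq.mpr h1).map (Int.castRingHom O)
      rw [Ideal.span_singleton_eq_top.mpr hu] at hB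
      rw [Ideal.one_eq_top, eq_top_iff, ← hB]
      exact Ideal.pow_le_self two_ne_zero
    rcases Int.natAbs_eq_iff.mp h1 with rfl | rfl
    · exact hB1 ▸ one_mem T
    · exact hB1 ▸ hneg
  · obtain ⟨r, hr, hrm⟩ := Nat.exists_prime_and_dvd h1
    replace hrm : (r : ℤ) ∣ m := Int.natCast_dvd.mpr hrm
    rcases hT r hr with hrad | ⟨C, hC, hCT⟩
    · refine peel ?_ ?_ (by push_cast; exact Ideal.span_singleton_pow _ _) (hsq r hr)
      · simpa [Int.natAbs_pow] using Nat.one_lt_pow two_ne_zero hr.one_lt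
      · have hrmO : (r : O) ∣ m := by simpa using map_dvd (Int.castRingHom O) hrm
        exact dvd_of_algebraMap_dvd_algebraMap (S := O)
          (by simpa using dvd_of_isRadical_of_sq_eq_span hrad hrmO hB)
    · exact peel (by simpa using hr.one_lt) hrm (by simpa using hC) hCT

lemma mem_sup_powers_of_sq_eq_span_intCast [CharZero O] [Algebra.IsIntegral ℤ O] {l : Ideal O}
    (hl : l ^ 2 = Ideal.span {2})
    (h : ∀ r : ℕ, r.Prime → r ≠ 2 →
      IsRadical (r : O) ∨ ∃ γ : O, Ideal.span {γ} ^ 2 = Ideal.span {(r : O)})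
    {m : ℤ} (hm : m ≠ 0) {B : Ideal O} (hB : B ^ 2 = Ideal.span {(m : O)}) :
    B ∈ Ideal.isPrincipalSubmonoid O ⊔ Submonoid.powers l := by
  have hprin (g : O) : Ideal.span {g} ∈ Ideal.isPrincipalSubmonoid O ⊔ Submonoid.powers l :=
    Submonoid.mem_sup_left (Ideal.span_singleton_mem_isPrincipalSubmonoid g)
  refine (Submonoid.mem_prod.mp (mem_of_sq_eq_span_intCast
    (T := (Ideal.isPrincipalSubmonoid O ⊔ Submonoid.powers l).prod ⊤)
    ⟨one_mem _, trivial⟩ (fun r _ ↦ ⟨hprin r, trivial⟩) (fun r hr ↦ ?_) hm hB)).1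
  rcases eq_or_ne r 2 with rfl | hr2
  · exact .inr ⟨l, mod_cast hl, Submonoid.mem_sup_right (Submonoid.mem_powers l), trivial⟩
  · exact (h r hr hr2).imp_right fun ⟨γ, hγ⟩ ↦ ⟨_, hγ, hprin γ, trivial⟩

end IdealSquares

lemma mem_of_pow_two_pow_mem {M : Type*} [Monoid M] {C P : Submonoid M}
    (h : ∀ x ∈ C, x ^ 2 ∈ P → x ∈ P) {x : M} (hx : x ∈ C) (k : ℕ) (hk : x ^ 2 ^ k ∈ P) : x ∈ P := by
  induction k with
  | zero => simpa using hk
  | succ k ih => exact ih (h _ (pow_mem hx _) (by rwa [← pow_mul, ← pow_succ]))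

lemma mem_fieldRange_of_sq_eq {K k : Type*} [Field K] [Field k] (φ : K →+* k) {a : K}
    (ha : IsSquare a) {z : k} (hz : z ^ 2 = φ a) : z ∈ φ.fieldRange := by
  obtain ⟨c, rfl⟩ := ha
  rw [map_mul, ← sq, sq_eq_sq_iff_eq_or_eq_neg] at hz
  rcases hz with rfl | rfl
  · exact ⟨c, rfl⟩
  · exact neg_mem ⟨c, rfl⟩

/-! ### Quadratic rings of integers -/

/-- `R` is a ring of quadratic integers containing a square root of `d ≠ 0`, with conjugation
`conj`. The rings of integers of the three quadratic subfields of the biquadratic field are of this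
kind. -/
structure QuadraticRing (R : Type*) [CommRing R] (d : ℤ) where
  conj : R ≃ₐ[ℤ] R
  isQuadraticConj : IsQuadraticConj conj
  sqrt : R
  sqrt_sq : sqrt ^ 2 = d
  conj_sqrt : conj sqrt = -sqrt
  ne_zero : d ≠ 0

/-- The genus character of an ideal, that is, of its absolute norm. -/
noncomputable def idealGenusChar (p : ℕ) [Fact p.Prime] (R : Type*) [CommRing R]
    [IsDedekindDomain R] [Module.Free ℤ R] : Ideal R →* ℤ :=
  (genusChar p).comp Ideal.absNorm.toMonoidHom

namespace QuadraticRing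

variable {R : Type*} [CommRing R] [IsDedekindDomain R] [CharZero R] {d : ℤ}

lemma exists_two_mul_eq_one_add_sqrt (A : QuadraticRing R d) (hd : d % 4 = 1) :
    ∃ y, 2 * y = 1 + A.sqrt := by
  obtain ⟨c, rfl⟩ : ∃ c : ℤ, d = 4 * c + 1 := ⟨d / 4, by omega⟩
  let K := FractionRing R
  have hroot : IsIntegral R ((1 + algebraMap R K A.sqrt) / 2) := by
    refine ⟨Polynomial.X ^ 2 - Polynomial.X - Polynomial.C (c : R), ?_, ?_⟩
    · monicity!
    · have hsq := congrArg (algebraMap R K) A.sqrt_sq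
      simp only [map_pow, Int.cast_add, Int.cast_mul, Int.cast_ofNat, Int.cast_one, map_add,
        map_mul, map_ofNat, map_one, map_intCast] at hsq
      rw [Polynomial.eval₂_sub, Polynomial.eval₂_sub, Polynomial.eval₂_pow, Polynomial.eval₂_X,
        Polynomial.eval₂_C, map_intCast]
      linear_combination hsq / 4
  obtain ⟨y, hy⟩ := IsIntegrallyClosed.isIntegral_iff.mp hroot
  refine ⟨y, FaithfulSMul.algebraMap_injective R K ?_⟩
  rw [map_mul, hy, map_add, map_one, map_ofNat, mul_div_cancel₀ _ two_ne_zero]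

variable [Module.Finite ℤ R]

lemma isNormValue_intNorm (A : QuadraticRing R d) (w : R) :
    IsNormValue ℚ d (Algebra.intNorm ℤ R w) := by
  have hsqrt : A.sqrt ^ 2 = algebraMap ℤ R d := by simpa using A.sqrt_sq
  simpa [IsNormValue] using A.isQuadraticConj.exists_map_intNorm_eq A.conj_sqrt hsqrt
    (Int.castRingHom ℚ) (by simpa using A.ne_zero) w

lemma absNorm_span_singleton (w : R) :
    Ideal.absNorm (Ideal.span {w}) = (Algebra.intNorm ℤ R w).natAbs := by
  rw [Ideal.absNorm_span_singleton, Algebra.intNorm_eq_norm]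

lemma exists_mul_sq_eq_intCast (A : QuadraticRing R d)
    (hneg : ∀ n : ℤ, n ≠ 0 → ¬ IsNormValue ℚ d (-n ^ 2)) {I : Ideal R} {α : R} (hα : α ≠ 0)
    (hI : I ^ 2 = Ideal.span {α}) : ∃ t, t ≠ 0 ∧ ∃ m : ℤ, m ≠ 0 ∧ α * t ^ 2 = m := by
  have habs : (Algebra.intNorm ℤ R α).natAbs = ((Ideal.absNorm I : ℤ) ^ 2).natAbs := by
    rw [← absNorm_span_singleton, ← hI, map_pow, Int.natAbs_pow, Int.natAbs_natCast]
  have hI0 : (Ideal.absNorm I : ℤ) ≠ 0 := by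
    rw [Nat.cast_ne_zero, ne_eq, Ideal.absNorm_eq_zero_iff]
    rintro rfl
    rw [← Ideal.zero_eq_bot, zero_pow two_ne_zero, eq_comm, Ideal.zero_eq_bot,
      Ideal.span_singleton_eq_bot] at hI
    exact hα hI
  have hnorm : Algebra.intNorm ℤ R α = (Ideal.absNorm I : ℤ) ^ 2 :=
    (Int.natAbs_eq_natAbs_iff.mp habs).resolve_right fun h ↦
      hneg _ hI0 (h ▸ A.isNormValue_intNorm α)
  simpa using A.isQuadraticConj.exists_mul_sq_eq_algebraMap hα
    (by rw [← hnorm, A.isQuadraticConj.algebraMap_intNorm])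

lemma exists_mul_span_sq_eq_span_intCast (A : QuadraticRing R d)
    (hneg : ∀ n : ℤ, n ≠ 0 → ¬ IsNormValue ℚ d (-n ^ 2)) {I : Ideal R} (hI : I ≠ ⊥)
    (hI2 : (I ^ 2).IsPrincipal) :
    ∃ t, t ≠ 0 ∧ ∃ m : ℤ, m ≠ 0 ∧ (I * Ideal.span {t}) ^ 2 = Ideal.span {(m : R)} := by
  obtain ⟨α, hα : I ^ 2 = Ideal.span {α}⟩ := hI2
  have hα0 : α ≠ 0 := by
    rw [ne_eq, ← Ideal.span_singleton_eq_bot, ← hα]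
    exact pow_ne_zero 2 hI
  obtain ⟨t, ht, m, hm, htm⟩ := A.exists_mul_sq_eq_intCast hneg hα0 hα
  exact ⟨t, ht, m, hm, by
    rw [mul_pow, hα, Ideal.span_singleton_pow, Ideal.span_singleton_mul_span_singleton, htm]⟩

lemma absNorm_span_two (A : QuadraticRing R d) : Ideal.absNorm (Ideal.span {(2 : R)}) = 4 := by
  have h := Algebra.norm_algebraMap (S := R) (2 : ℤ)
  rw [map_ofNat, A.isQuadraticConj.finrank_eq_two] at h
  rw [Ideal.absNorm_span_singleton, h]
  rfl

lemma isRadical_natCast (A : QuadraticRing R d) {r : ℕ} (hr : r.Prime) (hrd : ¬ (r : ℤ) ∣ 4 * d) :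
    IsRadical (r : R) := by
  have hr' := Nat.prime_iff_prime_int.mp hr
  simpa using A.isQuadraticConj.isRadical_algebraMap hr'.isRadical (D := 4 * d) (y := A.sqrt)
    (by simp [A.conj_sqrt, ← two_mul, mul_pow, A.sqrt_sq]; norm_num)
    (hr'.coprime_iff_not_dvd.mpr hrd)

lemma isRadical_natCast_of_mod_four_eq_one (A : QuadraticRing R d) (hd : d % 4 = 1) {r : ℕ}
    (hr : r.Prime) (hrd : ¬ (r : ℤ) ∣ d) : IsRadical (r : R) := by
  obtain ⟨y, hy⟩ := A.exists_two_mul_eq_one_add_sqrt hd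
  have hconj := congrArg A.conj hy
  rw [map_mul, map_ofNat, map_add, map_one, A.conj_sqrt] at hconj
  have hyy : y - A.conj y = A.sqrt :=
    mul_left_cancel₀ (two_ne_zero (α := R)) (by linear_combination hy - hconj)
  have hr' := Nat.prime_iff_prime_int.mp hr
  simpa using A.isQuadraticConj.isRadical_algebraMap hr'.isRadical (D := d)
    (y := y) (by simp [hyy, A.sqrt_sq]) (hr'.coprime_iff_not_dvd.mpr hrd)

lemma idealGenusChar_span_singleton {p : ℕ} [Fact p.Prime] {e : ℤ} (A : QuadraticRing R (p * e))
    (hp : p % 4 = 1) (he : ¬ (p : ℤ) ∣ e) (hsq : IsSquare (e : ZMod p)) {g : R} (hg : g ≠ 0) :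
    idealGenusChar p R (Ideal.span {g}) = 1 := by
  refine (congrArg (genusChar p) (absNorm_span_singleton g)).trans
    (genusChar_natAbs_of_isNormValue hp he hsq ?_ (A.isNormValue_intNorm g))
  rwa [ne_eq, Algebra.intNorm_eq_zero]

lemma map_eq_map_conj (A : QuadraticRing R d) {O : Type*} [CommRing O] [IsDomain O]
    [CharZero O] {f g : R →+* O} (h : f A.sqrt = -g A.sqrt) (w : R) : f w = g (A.conj w) := by
  obtain ⟨a, ha⟩ := A.isQuadraticConj.exists_algebraMap_eq (A.isQuadraticConj.apply_add_apply w)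
  obtain ⟨b, hb⟩ := A.isQuadraticConj.exists_algebraMap_eq
    (A.isQuadraticConj.apply_sub_apply_mul A.conj_sqrt w)
  have ha' (φ : R →+* O) : φ w + φ (A.conj w) = a := by simp [← map_add, ← ha]
  have hb' (φ : R →+* O) : (φ w - φ (A.conj w)) * φ A.sqrt = b := by
    simp [← map_sub, ← map_mul, ← hb]
  have hsqrt : g A.sqrt ≠ 0 := by
    intro h0
    have hsq := congrArg g A.sqrt_sq
    rw [map_pow, h0, map_intCast, zero_pow two_ne_zero, eq_comm, Int.cast_eq_zero] at hsq
    exact A.ne_zero hsq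
  have hf := hb' f
  rw [h] at hf
  refine mul_right_cancel₀ (mul_ne_zero two_ne_zero hsqrt) ?_
  linear_combination g A.sqrt * ha' f - hf - g A.sqrt * ha' g + hb' g

lemma map_injective (A : QuadraticRing R d) {K : Type*} [Field K] [CharZero K] (φ : R →+* K) :
    Function.Injective φ := by
  refine (injective_iff_map_eq_zero φ).mpr fun w hw ↦ ?_
  have hn := congrArg φ (A.isQuadraticConj.algebraMap_intNorm w)
  rw [map_mul, hw, zero_mul, algebraMap_int_eq, eq_intCast, map_intCast, Int.cast_eq_zero] at hn
  rwa [Algebra.intNorm_eq_zero] at hn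

lemma exists_ringHom (A : QuadraticRing R d) {K : Type*} [Field K] [CharZero K]
    (hsq : IsSquare (d : K)) : Nonempty (R →+* K) := by
  let f : R →+* AlgebraicClosure K := (IsAlgClosed.lift : R →ₐ[ℤ] AlgebraicClosure K)
  let ι := algebraMap K (AlgebraicClosure K)
  have hsqrt : f A.sqrt ^ 2 = ι d := by rw [← map_pow, A.sqrt_sq, map_intCast, map_intCast]
  have hsqrt0 : f A.sqrt ≠ 0 := fun h0 ↦ A.ne_zero (by simpa [h0, eq_comm] using hsqrt)
  have hf := A.isQuadraticConj.map_mem_subfield two_ne_zero (M := ι.fieldRange) f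
    (fun a ↦ by simp) A.conj_sqrt (mem_fieldRange_of_sq_eq ι hsq hsqrt) hsqrt0
  exact ⟨(ι.rangeRestrictFieldEquiv.symm : ι.fieldRange →+* K).comp (f.codRestrict _ hf)⟩

end QuadraticRing

/-! ### The class groups of the quadratic subfields -/

lemma not_natCast_dvd_of_prime_ne {r l : ℕ} (hr : r.Prime) (hl : l.Prime) (h : r ≠ l) :
    ¬ (r : ℤ) ∣ l := by
  rwa [Int.natCast_dvd_natCast, Nat.prime_dvd_prime_iff_eq hr hl]

lemma not_natCast_dvd_mul_of_prime_ne {r : ℕ} (hr : r.Prime) {a b : ℤ} (ha : ¬ (r : ℤ) ∣ a)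
    (hb : ¬ (r : ℤ) ∣ b) : ¬ (r : ℤ) ∣ a * b :=
  (Nat.prime_iff_prime_int.mp hr).not_dvd_mul ha hb

lemma not_natCast_dvd_four_mul {r : ℕ} (hr : r.Prime) (hr2 : r ≠ 2) {a : ℤ}
    (ha : ¬ (r : ℤ) ∣ a) : ¬ (r : ℤ) ∣ 4 * a := by
  refine (Nat.prime_iff_prime_int.mp hr).not_dvd_mul ?_ ha
  rw [show (4 : ℤ) = (2 : ℕ) ^ 2 by norm_num]
  exact mt (Nat.prime_iff_prime_int.mp hr).dvd_of_dvd_pow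
    (not_natCast_dvd_of_prime_ne hr Nat.prime_two hr2)

namespace QuadraticRing

variable {R : Type*} [CommRing R]

lemma exists_span_sq_eq_span_of_isUnit {P Q : ℕ} (A : QuadraticRing R (P * Q)) {a b : ℤ}
    (hab : IsUnit (P * a ^ 2 - Q * b ^ 2)) :
    (∃ γ : R, Ideal.span {γ} ^ 2 = Ideal.span {(P : R)}) ∧
      ∃ γ : R, Ideal.span {γ} ^ 2 = Ideal.span {(Q : R)} := by
  have hsqrt := A.sqrt_sq
  have hba : IsUnit (Q * b ^ 2 - P * a ^ 2) := by rwa [← IsUnit.neg_iff, neg_sub]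
  rw [Int.cast_mul] at hsqrt
  rw [← Int.cast_natCast P, ← Int.cast_natCast Q]
  exact ⟨_root_.exists_span_sq_eq_span_of_isUnit hsqrt hab,
    _root_.exists_span_sq_eq_span_of_isUnit (hsqrt.trans (mul_comm _ _)) hba⟩

variable [IsDedekindDomain R] [CharZero R] [Module.Finite ℤ R]
  {p q s : ℕ} [Fact p.Prime] [Fact q.Prime] [Fact s.Prime]

lemma mem_sup_powers_of_sq_eq_span_intCast (A : QuadraticRing R (p * q)) (hp : p % 8 = 5)
    (hq : q % 4 = 3) (hsq : IsSquare (q : ZMod p)) {l : Ideal R} (hl : l ^ 2 = Ideal.span {2})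
    {m : ℤ} (hm : m ≠ 0) {B : Ideal R} (hB : B ^ 2 = Ideal.span {(m : R)}) :
    B ∈ Ideal.isPrincipalSubmonoid R ⊔ Submonoid.powers l := by
  have hpq : p ≠ q := by rintro rfl; omega
  obtain ⟨a, b, hab⟩ := exists_isUnit_mul_sq_sub_mul_sq hpq (by omega) hq (.inr ⟨hp, hsq⟩)
  obtain ⟨hγp, hγq⟩ := A.exists_span_sq_eq_span_of_isUnit hab
  refine _root_.mem_sup_powers_of_sq_eq_span_intCast hl (fun r hr hr2 ↦ ?_) hm hB
  by_cases hrp : r = p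
  · exact .inr (hrp ▸ hγp)
  by_cases hrq : r = q
  · exact .inr (hrq ▸ hγq)
  exact .inl <| A.isRadical_natCast hr <| not_natCast_dvd_four_mul hr hr2 <|
    not_natCast_dvd_mul_of_prime_ne hr (not_natCast_dvd_of_prime_ne hr Fact.out hrp)
      (not_natCast_dvd_of_prime_ne hr Fact.out hrq)

/-- By Hilbert 90 some multiple of `I` has its square generated by an integer, so `I` is principal
up to the prime above `2`, whose genus is nontrivial. -/
lemma isPrincipal_of_sq (A : QuadraticRing R (p * q)) (hp : p % 8 = 5) (hq : q % 4 = 3)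
    (hsq : IsSquare (q : ZMod p)) {I : Ideal R} (hI : I ≠ ⊥) (hψ : idealGenusChar p R I = 1)
    (hI2 : (I ^ 2).IsPrincipal) : I.IsPrincipal := by
  have hpq : p ≠ q := by rintro rfl; omega
  have hd : (p * q : ℤ) % 4 = 3 := by
    rw [Int.mul_emod, show (p : ℤ) % 4 = 1 by omega, show (q : ℤ) % 4 = 3 by omega]
    rfl
  have hneg (n : ℤ) (hn : n ≠ 0) : ¬ IsNormValue ℚ (p * q) (-n ^ 2) := by
    rw [mul_comm]
    exact not_isNormValue_neg_sq hq (not_natCast_dvd_of_prime_ne Fact.out Fact.out hpq.symm) hn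
  have hgenus {g : R} (hg : g ≠ 0) : idealGenusChar p R (Ideal.span {g}) = 1 :=
    A.idealGenusChar_span_singleton (by omega)
      (not_natCast_dvd_of_prime_ne Fact.out Fact.out hpq) (mod_cast hsq) hg
  obtain ⟨t, ht, m, hm, htm⟩ := A.exists_mul_span_sq_eq_span_intCast hneg hI hI2
  have hl := span_two_one_add_sq A.sqrt_sq hd
  rcases isPrincipal_or_of_mem_sup_powers hl
    (A.mem_sup_powers_of_sq_eq_span_intCast hp hq hsq hl hm htm) with ⟨g, hg⟩ | ⟨g, hg⟩
  · exact isPrincipal_of_mul_span_eq_span ht hg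
  · have hg0 : g ≠ 0 := by
      rintro rfl
      rw [Ideal.span_singleton_zero, Ideal.bot_mul, ← Ideal.zero_eq_bot, mul_eq_zero,
        Ideal.zero_eq_bot, Ideal.span_singleton_eq_bot] at hg
      exact hg.elim hI ht
    have hl2 : Ideal.absNorm (Ideal.span {2, 1 + A.sqrt}) = 2 := by
      have := congrArg Ideal.absNorm hl
      rw [map_pow, A.absNorm_span_two] at this
      nlinarith
    have hψl : idealGenusChar p R (Ideal.span {2, 1 + A.sqrt}) = -1 :=
      (congrArg _ hl2).trans (genusChar_two hp)
    have hcontra := congrArg (idealGenusChar p R) hg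
    rw [map_mul, map_mul, hψ, hgenus ht, hgenus hg0, hψl] at hcontra
    omega

lemma isPrincipal_of_pow_two_pow (A : QuadraticRing R (p * q)) (hp : p % 8 = 5) (hq : q % 4 = 3)
    (hsq : IsSquare (q : ZMod p)) {I : Ideal R} (hI : I ≠ ⊥) (hψ : idealGenusChar p R I = 1)
    {k : ℕ} (hk : (I ^ 2 ^ k).IsPrincipal) : I.IsPrincipal :=
  mem_of_pow_two_pow_mem (C := nonZeroDivisors (Ideal R) ⊓ MonoidHom.mker (idealGenusChar p R))
    (P := Ideal.isPrincipalSubmonoid R)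
    (fun _ hJ ↦ A.isPrincipal_of_sq hp hq hsq (nonZeroDivisors.ne_zero hJ.1) hJ.2)
    ⟨mem_nonZeroDivisors_of_ne_zero hI, hψ⟩ k hk

/-- In `ℚ(√(qs))` no prime above `2` is needed, since `qs ≡ 1 mod 4`; the submonoid `S` records the
integers that can occur. -/
lemma isPrincipal_and_mem_of_sq_eq_span_intCast (A : QuadraticRing R (q * s)) (hqs : q ≠ s)
    (hq : q % 4 = 3) (hs : s % 4 = 3) {S : Submonoid ℤ} (hneg : -1 ∈ S) (hsq : ∀ r : ℤ, r ^ 2 ∈ S)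
    (hqS : (q : ℤ) ∈ S) (hsS : (s : ℤ) ∈ S) {m : ℤ} (hm : m ≠ 0) {B : Ideal R}
    (hB : B ^ 2 = Ideal.span {(m : R)}) : B.IsPrincipal ∧ m ∈ S := by
  have hqs4 : q * s % 4 = 1 := by rw [Nat.mul_mod, hq, hs]
  obtain ⟨a, b, hab⟩ := exists_isUnit_mul_sq_sub_mul_sq hqs (by omega) hs (.inl hqs4)
  obtain ⟨⟨γ, hγ⟩, δ, hδ⟩ := A.exists_span_sq_eq_span_of_isUnit hab
  have hprin (g : R) := Ideal.span_singleton_mem_isPrincipalSubmonoid g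
  refine Submonoid.mem_prod.mp (mem_of_sq_eq_span_intCast
    (T := (Ideal.isPrincipalSubmonoid R).prod S)
    ⟨one_mem _, hneg⟩ (fun r _ ↦ ⟨hprin r, hsq r⟩) (fun r hr ↦ ?_) hm hB)
  by_cases hrq : r = q
  · exact .inr ⟨_, hrq ▸ hγ, hprin γ, hrq ▸ hqS⟩
  by_cases hrs : r = s
  · exact .inr ⟨_, hrs ▸ hδ, hprin δ, hrs ▸ hsS⟩
  exact .inl <| A.isRadical_natCast_of_mod_four_eq_one (mod_cast hqs4) hr <|
    not_natCast_dvd_mul_of_prime_ne hr (not_natCast_dvd_of_prime_ne hr Fact.out hrq)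
      (not_natCast_dvd_of_prime_ne hr Fact.out hrs)

lemma not_isNormValue_neg_sq_of_prime_ne (hqs : q ≠ s) (hq : q % 4 = 3) {n : ℤ} (hn : n ≠ 0) :
    ¬ IsNormValue ℚ (q * s) (-n ^ 2) :=
  not_isNormValue_neg_sq hq (not_natCast_dvd_of_prime_ne Fact.out Fact.out hqs) hn

lemma isPrincipal_of_pow_two_pow_of_ne (A : QuadraticRing R (q * s)) (hqs : q ≠ s)
    (hq : q % 4 = 3) (hs : s % 4 = 3) {I : Ideal R} (hI : I ≠ ⊥) {k : ℕ}
    (hk : (I ^ 2 ^ k).IsPrincipal) : I.IsPrincipal := by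
  refine mem_of_pow_two_pow_mem (C := nonZeroDivisors (Ideal R))
    (P := Ideal.isPrincipalSubmonoid R) (fun J hJ hJ2 ↦ ?_) (mem_nonZeroDivisors_of_ne_zero hI) k hk
  obtain ⟨t, ht, m, hm, htm⟩ := A.exists_mul_span_sq_eq_span_intCast
    (fun n hn ↦ not_isNormValue_neg_sq_of_prime_ne hqs hq hn) (nonZeroDivisors.ne_zero hJ) hJ2
  obtain ⟨⟨g, hg⟩, -⟩ := A.isPrincipal_and_mem_of_sq_eq_span_intCast hqs hq hs (S := ⊤)
    trivial (fun _ ↦ trivial) trivial trivial hm htm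
  exact isPrincipal_of_mul_span_eq_span ht hg

lemma isSquare_map_of_isUnit (A : QuadraticRing R (q * s)) (hqs : q ≠ s) (hq : q % 4 = 3)
    (hs : s % 4 = 3) {K : Type*} [Field K] [CharZero K] (hneg : IsSquare (-1 : K))
    (hqK : IsSquare (q : K)) (hsK : IsSquare (s : K)) (φ : R →+* K) {u : R} (hu : IsUnit u) :
    IsSquare (φ u) := by
  obtain ⟨t, ht, m, hm, htm⟩ := A.exists_mul_sq_eq_intCast (I := ⊤)
    (fun n hn ↦ not_isNormValue_neg_sq_of_prime_ne hqs hq hn) hu.ne_zero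
    (by rw [Ideal.span_singleton_eq_top.mpr hu, ← Ideal.one_eq_top, one_pow])
  obtain ⟨-, c, hc⟩ := A.isPrincipal_and_mem_of_sq_eq_span_intCast hqs hq hs
    (S := (Submonoid.square K).comap (Int.castRingHom K)) (by simpa using hneg)
    (fun r ↦ by simp [IsSquare.sq]) (by simpa using hqK) (by simpa using hsK) hm
    (B := Ideal.span {t}) (by
      rw [Ideal.span_singleton_pow, ← htm, Ideal.span_singleton_mul_left_unit hu])
  have hmap : φ u * φ t ^ 2 = m := by rw [← map_pow, ← map_mul, htm, map_intCast]
  have ht0 : φ t ≠ 0 := (map_ne_zero_iff _ (A.map_injective φ)).mpr ht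
  refine ⟨c / φ t, ?_⟩
  rw [div_mul_div_comm, eq_div_iff (mul_ne_zero ht0 ht0), ← hc, ← pow_two, hmap]
  simp

end QuadraticRing

/-! ### Biquadratic rings of integers -/

section Resolvent

variable {O : Type*} [CommRing O]

/-- The element `t` of the explicit form of Hilbert's theorem 90 for a biquadratic extension: if
`aᵢ` has conjugate `cᵢ` and norm `n` in the `i`-th quadratic subring, then for signs `e₁`, `e₂` the
element `a₁a₂a₃t²` is a rational integer. -/
def biquadraticResolvent (e₁ e₂ n : ℤ) (c₁ c₂ c₃ : O) : O :=
  c₁ * c₂ * c₃ + n * (e₁ * c₁ + e₂ * c₂ + e₁ * e₂ * c₃)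

lemma biquadraticResolvent_swap (e₁ e₂ n : ℤ) (c₁ c₂ c₃ : O) :
    biquadraticResolvent e₂ e₁ n c₂ c₁ c₃ = biquadraticResolvent e₁ e₂ n c₁ c₂ c₃ := by
  unfold biquadraticResolvent
  ring

variable [IsDomain O] [CharZero O]

lemma exists_biquadraticResolvent_ne_zero (n : ℤ) {c₁ c₂ c₃ : O} (h₁ : c₁ ≠ 0) (h₂ : c₂ ≠ 0)
    (h₃ : c₃ ≠ 0) : ∃ e₁ e₂ : ℤ, e₁ ^ 2 = 1 ∧ e₂ ^ 2 = 1 ∧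
      biquadraticResolvent e₁ e₂ n c₁ c₂ c₃ ≠ 0 := by
  by_contra! h
  have hsum : 4 * (c₁ * c₂ * c₃) =
      biquadraticResolvent 1 1 n c₁ c₂ c₃ + biquadraticResolvent 1 (-1) n c₁ c₂ c₃ +
      (biquadraticResolvent (-1) 1 n c₁ c₂ c₃ + biquadraticResolvent (-1) (-1) n c₁ c₂ c₃) := by
    unfold biquadraticResolvent
    push_cast
    ring
  rw [h 1 1 rfl rfl, h 1 (-1) rfl rfl, h (-1) 1 rfl rfl, h (-1) (-1) rfl rfl] at hsum
  simp [h₁, h₂, h₃] at hsum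

lemma map_mul_biquadraticResolvent_sq {F : Type*} [FunLike F O O] [RingHomClass F O O] (σ : F)
    {e₁ e₂ n : ℤ} (he₁ : e₁ ^ 2 = 1) {a₁ a₂ a₃ c₁ c₂ c₃ : O} (h₂ : a₂ * c₂ = n)
    (h₃ : a₃ * c₃ = n) (hc₂ : c₂ ≠ 0) (hc₃ : c₃ ≠ 0) (σa₁ : σ a₁ = a₁) (σc₁ : σ c₁ = c₁)
    (σa₂ : σ a₂ = c₂) (σc₂ : σ c₂ = a₂) (σa₃ : σ a₃ = c₃)
    (σc₃ : σ c₃ = a₃) :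
    σ (a₁ * a₂ * a₃ * biquadraticResolvent e₁ e₂ n c₁ c₂ c₃ ^ 2) =
      a₁ * a₂ * a₃ * biquadraticResolvent e₁ e₂ n c₁ c₂ c₃ ^ 2 := by
  have he : (e₁ : O) ^ 2 = 1 := mod_cast he₁
  set t := biquadraticResolvent e₁ e₂ n c₁ c₂ c₃ with ht
  have hσt : σ t * (c₂ * c₃) = n * e₁ * t := by
    simp only [ht, biquadraticResolvent, map_add, map_mul, map_intCast, σc₁, σc₂, σc₃]
    linear_combination (c₁ * a₃ * c₃ + n * e₂ * c₃) * h₂ + (c₁ * n + n * e₁ * e₂ * c₂) * h₃ -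
      n ^ 2 * (c₁ + e₂ * c₃) * he
  apply mul_left_cancel₀ (mul_ne_zero hc₂ hc₃)
  calc c₂ * c₃ * σ (a₁ * a₂ * a₃ * t ^ 2) = a₁ * (σ t * (c₂ * c₃)) ^ 2 := by
        simp only [map_mul, map_pow, σa₁, σa₂, σa₃]
        ring
    _ = a₁ * n * n * t ^ 2 * e₁ ^ 2 := by rw [hσt]; ring
    _ = a₁ * (a₂ * c₂) * (a₃ * c₃) * t ^ 2 := by rw [he, h₂, h₃, mul_one]
    _ = c₂ * c₃ * (a₁ * a₂ * a₃ * t ^ 2) := by ring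

end Resolvent

/-- `O` is a ring of biquadratic integers with quadratic subrings `Rᵢ ∋ √dᵢ`, and `conjᵢ` is the
nontrivial automorphism of `O` over `Rᵢ`. The rings `Rᵢ` and `O` stand for the rings of integers of
the three quadratic subfields of a biquadratic field and of the field itself. -/
structure BiquadraticRing (O R₁ R₂ R₃ : Type*)
    [CommRing O] [CommRing R₁] [CommRing R₂] [CommRing R₃]
    [Algebra R₁ O] [Algebra R₂ O] [Algebra R₃ O] (d₁ d₂ d₃ : ℤ) where
  quad₁ : QuadraticRing R₁ d₁
  quad₂ : QuadraticRing R₂ d₂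
  quad₃ : QuadraticRing R₃ d₃
  conj₁ : O ≃ₐ[R₁] O
  conj₂ : O ≃ₐ[R₂] O
  conj₃ : O ≃ₐ[R₃] O
  isQuadraticConj₁ : IsQuadraticConj conj₁
  isQuadraticConj₂ : IsQuadraticConj conj₂
  isQuadraticConj₃ : IsQuadraticConj conj₃
  conj₁_sqrt₂ : conj₁ (algebraMap R₂ O quad₂.sqrt) = -algebraMap R₂ O quad₂.sqrt
  conj₁_sqrt₃ : conj₁ (algebraMap R₃ O quad₃.sqrt) = -algebraMap R₃ O quad₃.sqrt
  conj₂_sqrt₁ : conj₂ (algebraMap R₁ O quad₁.sqrt) = -algebraMap R₁ O quad₁.sqrt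
  conj₂_sqrt₃ : conj₂ (algebraMap R₃ O quad₃.sqrt) = -algebraMap R₃ O quad₃.sqrt
  conj₃_sqrt₁ : conj₃ (algebraMap R₁ O quad₁.sqrt) = -algebraMap R₁ O quad₁.sqrt
  conj₂_conj₁ : ∀ w, conj₂ (conj₁ w) = conj₃ w

lemma QuadraticRing.apply_algebraMap {R O : Type*} [CommRing R] [IsDedekindDomain R] [CharZero R]
    [Module.Finite ℤ R] [CommRing O] [IsDomain O] [CharZero O] [Algebra R O] {d : ℤ}
    (A : QuadraticRing R d) {F : Type*} [FunLike F O O] [RingHomClass F O O] {σ : F}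
    (h : σ (algebraMap R O A.sqrt) = -algebraMap R O A.sqrt) (w : R) :
    σ (algebraMap R O w) = algebraMap R O (A.conj w) :=
  A.map_eq_map_conj (f := (σ : O →+* O).comp (algebraMap R O)) h w

namespace BiquadraticRing

variable {O R₁ R₂ R₃ : Type*} [CommRing O] [CommRing R₁] [CommRing R₂] [CommRing R₃]
  [Algebra R₁ O] [Algebra R₂ O] [Algebra R₃ O] {d₁ d₂ d₃ : ℤ}

lemma map_conj₂_map_conj₁ (B : BiquadraticRing O R₁ R₂ R₃ d₁ d₂ d₃) (I : Ideal O) :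
    (I.map B.conj₁).map B.conj₂ = I.map B.conj₃ := by
  have hcomp : (B.conj₂ : O →+* O).comp (B.conj₁ : O →+* O) = B.conj₃ :=
    RingHom.ext B.conj₂_conj₁
  change Ideal.map (B.conj₂ : O →+* O) (I.map (B.conj₁ : O →+* O)) = I.map (B.conj₃ : O →+* O)
  rw [Ideal.map_map, hcomp]

variable [IsDedekindDomain O] [CharZero O] [IsDedekindDomain R₁] [CharZero R₁] [Module.Finite ℤ R₁]
  [Module.Finite R₁ O] [Module.IsTorsionFree R₁ O]

lemma exists_intCast_eq (B : BiquadraticRing O R₁ R₂ R₃ d₁ d₂ d₃) {x : O} (h₁ : B.conj₁ x = x)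
    (h₂ : B.conj₂ x = x) : ∃ m : ℤ, (m : O) = x := by
  obtain ⟨v, rfl⟩ := B.isQuadraticConj₁.exists_algebraMap_eq h₁
  rw [B.quad₁.apply_algebraMap B.conj₂_sqrt₁] at h₂
  obtain ⟨m, rfl⟩ := B.quad₁.isQuadraticConj.exists_algebraMap_eq
    (FaithfulSMul.algebraMap_injective R₁ O h₂)
  exact ⟨m, by rw [algebraMap_int_eq, eq_intCast, map_intCast]⟩

lemma sq_mul_span_intCast_eq [IsDedekindDomain R₂] [CharZero R₂] [Module.Finite R₂ O]
    [Module.IsTorsionFree R₂ O] [IsDedekindDomain R₃] [CharZero R₃] [Module.Finite R₃ O]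
    [Module.IsTorsionFree R₃ O] (B : BiquadraticRing O R₁ R₂ R₃ d₁ d₂ d₃) {I : Ideal O} {n : ℤ}
    {a₁ : R₁} {a₂ : R₂} {a₃ : R₃} (h₁ : a₁ * B.quad₁.conj a₁ = n)
    (hI₁ : Ideal.relNorm R₁ I = Ideal.span {a₁}) (hI₂ : Ideal.relNorm R₂ I = Ideal.span {a₂})
    (hI₃ : Ideal.relNorm R₃ I = Ideal.span {a₃}) :
    I ^ 2 * Ideal.span {(n : O)} =
      Ideal.span {algebraMap R₁ O a₁ * algebraMap R₂ O a₂ * algebraMap R₃ O a₃} := by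
  have hII₁ := B.isQuadraticConj₁.mul_map_of_relNorm_eq_span hI₁
  have hII₂ := B.isQuadraticConj₂.mul_map_of_relNorm_eq_span hI₂
  have hII₃ := B.isQuadraticConj₃.mul_map_of_relNorm_eq_span hI₃
  have hI₂I₃ : I.map B.conj₂ * I.map B.conj₃ =
      Ideal.span {algebraMap R₁ O (B.quad₁.conj a₁)} := by
    rw [← B.map_conj₂_map_conj₁, ← Ideal.map_mul, hII₁, Ideal.map_span, Set.image_singleton]
    rw [B.quad₁.apply_algebraMap B.conj₂_sqrt₁]
  have hn : Ideal.span {(n : O)} =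
      Ideal.span {algebraMap R₁ O a₁} * (I.map B.conj₂ * I.map B.conj₃) := by
    rw [hI₂I₃, Ideal.span_singleton_mul_span_singleton, ← map_mul, h₁, map_intCast]
  rw [hn, ← Ideal.span_singleton_mul_span_singleton, ← Ideal.span_singleton_mul_span_singleton,
    ← hII₂, ← hII₃]
  ring

variable [IsDedekindDomain R₂] [CharZero R₂] [Module.Finite ℤ R₂]
  [IsDedekindDomain R₃] [CharZero R₃] [Module.Finite ℤ R₃]

lemma exists_mul_sq_eq_intCast (B : BiquadraticRing O R₁ R₂ R₃ d₁ d₂ d₃) {n : ℤ} (hn : n ≠ 0)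
    {a₁ : R₁} {a₂ : R₂} {a₃ : R₃} (h₁ : a₁ * B.quad₁.conj a₁ = n) (h₂ : a₂ * B.quad₂.conj a₂ = n)
    (h₃ : a₃ * B.quad₃.conj a₃ = n) :
    ∃ t : O, t ≠ 0 ∧ ∃ m : ℤ, m ≠ 0 ∧
      algebraMap R₁ O a₁ * algebraMap R₂ O a₂ * algebraMap R₃ O a₃ * t ^ 2 = m := by
  have conj₁_conj₁ := B.quad₁.isQuadraticConj.apply_apply
  have conj₂_conj₂ := B.quad₂.isQuadraticConj.apply_apply
  have conj₃_conj₃ := B.quad₃.isQuadraticConj.apply_apply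
  have σ₁₂ := B.quad₂.apply_algebraMap B.conj₁_sqrt₂
  have σ₁₃ := B.quad₃.apply_algebraMap B.conj₁_sqrt₃
  have σ₂₁ := B.quad₁.apply_algebraMap B.conj₂_sqrt₁
  have σ₂₃ := B.quad₃.apply_algebraMap B.conj₂_sqrt₃
  replace h₁ := congrArg (algebraMap R₁ O) h₁
  replace h₂ := congrArg (algebraMap R₂ O) h₂
  replace h₃ := congrArg (algebraMap R₃ O) h₃
  rw [map_mul, map_intCast] at h₁ h₂ h₃
  have hn' : (n : O) ≠ 0 := Int.cast_ne_zero.mpr hn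
  have hc₁ := right_ne_zero_of_mul (h₁ ▸ hn')
  have hc₂ := right_ne_zero_of_mul (h₂ ▸ hn')
  have hc₃ := right_ne_zero_of_mul (h₃ ▸ hn')
  obtain ⟨e₁, e₂, he₁, he₂, ht⟩ := exists_biquadraticResolvent_ne_zero n hc₁ hc₂ hc₃
  have fixed₁ := map_mul_biquadraticResolvent_sq B.conj₁ (e₂ := e₂) he₁ h₂ h₃ hc₂ hc₃
    (B.conj₁.commutes a₁) (B.conj₁.commutes (B.quad₁.conj a₁)) (σ₁₂ a₂)
    (by rw [σ₁₂, conj₂_conj₂]) (σ₁₃ a₃) (by rw [σ₁₃, conj₃_conj₃])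
  have fixed₂ := map_mul_biquadraticResolvent_sq B.conj₂ (e₂ := e₁) he₂ h₁ h₃ hc₁ hc₃
    (B.conj₂.commutes a₂) (B.conj₂.commutes (B.quad₂.conj a₂)) (σ₂₁ a₁)
    (by rw [σ₂₁, conj₁_conj₁]) (σ₂₃ a₃) (by rw [σ₂₃, conj₃_conj₃])
  rw [biquadraticResolvent_swap, mul_comm (algebraMap R₂ O a₂)] at fixed₂
  obtain ⟨m, hm⟩ := B.exists_intCast_eq fixed₁ fixed₂
  refine ⟨_, ht, m, ?_, hm.symm⟩
  refine (Int.cast_ne_zero (α := O)).mp (hm ▸ ?_)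
  exact mul_ne_zero (mul_ne_zero (mul_ne_zero (left_ne_zero_of_mul (h₁ ▸ hn'))
    (left_ne_zero_of_mul (h₂ ▸ hn'))) (left_ne_zero_of_mul (h₃ ▸ hn'))) (pow_ne_zero 2 ht)

variable [Module.Finite R₂ O] [Module.IsTorsionFree R₂ O]
  [Module.Finite R₃ O] [Module.IsTorsionFree R₃ O]

lemma exists_mul_span_sq_eq_span_intCast (B : BiquadraticRing O R₁ R₂ R₃ d₁ d₂ d₃) {I : Ideal O}
    {n : ℤ} (hn : n ≠ 0) {a₁ : R₁} {a₂ : R₂} {a₃ : R₃} (h₁ : Algebra.intNorm ℤ R₁ a₁ = n)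
    (h₂ : Algebra.intNorm ℤ R₂ a₂ = n) (h₃ : Algebra.intNorm ℤ R₃ a₃ = n)
    (hI₁ : Ideal.relNorm R₁ I = Ideal.span {a₁}) (hI₂ : Ideal.relNorm R₂ I = Ideal.span {a₂})
    (hI₃ : Ideal.relNorm R₃ I = Ideal.span {a₃}) :
    ∃ t : O, t ≠ 0 ∧ ∃ m : ℤ, m ≠ 0 ∧ (I * Ideal.span {t}) ^ 2 = Ideal.span {(m : O)} := by
  have h₁' := h₁ ▸ B.quad₁.isQuadraticConj.algebraMap_intNorm a₁
  have h₂' := h₂ ▸ B.quad₂.isQuadraticConj.algebraMap_intNorm a₂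
  have h₃' := h₃ ▸ B.quad₃.isQuadraticConj.algebraMap_intNorm a₃
  obtain ⟨t, ht, m, hm, htm⟩ := B.exists_mul_sq_eq_intCast hn h₁'.symm h₂'.symm h₃'.symm
  refine ⟨n * t, mul_ne_zero (Int.cast_ne_zero.mpr hn) ht, n * m, mul_ne_zero hn hm, ?_⟩
  calc (I * Ideal.span {(n : O) * t}) ^ 2
      = I ^ 2 * Ideal.span {(n : O)} * Ideal.span {t ^ 2} * Ideal.span {(n : O)} := by
        rw [← Ideal.span_singleton_mul_span_singleton, ← Ideal.span_singleton_pow]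
        ring
    _ = Ideal.span {((n * m : ℤ) : O)} := by
        rw [B.sq_mul_span_intCast_eq h₁'.symm hI₁ hI₂ hI₃, Ideal.span_singleton_mul_span_singleton,
          htm, Ideal.span_singleton_mul_span_singleton, mul_comm, Int.cast_mul]

end BiquadraticRing

/-- The congruence and residue conditions on the primes `p`, `q`, `s` under which the `2`-class
group of `ℚ(√(pq), √(ps))` is computed. -/
structure IsBiquadraticTriple (p q s : ℕ) : Prop where
  mod_eight : p % 8 = 5
  mod_four₁ : q % 4 = 3
  mod_four₂ : s % 4 = 3
  ne : q ≠ s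
  isSquare₁ : IsSquare (p : ZMod q)
  isSquare₂ : IsSquare (p : ZMod s)

namespace IsBiquadraticTriple

variable {p q s : ℕ}

lemma swap (H : IsBiquadraticTriple p q s) : IsBiquadraticTriple p s q :=
  ⟨H.mod_eight, H.mod_four₂, H.mod_four₁, H.ne.symm, H.isSquare₂, H.isSquare₁⟩

lemma p_ne_q (H : IsBiquadraticTriple p q s) : p ≠ q := by
  rintro rfl
  have := H.mod_eight
  have := H.mod_four₁
  omega

lemma p_ne_s (H : IsBiquadraticTriple p q s) : p ≠ s :=
  H.swap.p_ne_q

lemma p_ne_two (H : IsBiquadraticTriple p q s) : p ≠ 2 := by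
  rintro rfl
  exact absurd H.mod_eight (by decide)

lemma p_mod_four (H : IsBiquadraticTriple p q s) : p % 4 = 1 := by
  have := H.mod_eight
  omega

variable [Fact p.Prime]

lemma isSquare_neg_one_padic (H : IsBiquadraticTriple p q s) : IsSquare (-1 : ℚ_[p]) := by
  simpa using isSquare_padic_of_isSquare_zmod H.p_ne_two (n := -1) (by
    simpa [Int.natCast_dvd] using (Fact.out : p.Prime).ne_one)
    (by simpa using (ZMod.exists_sq_eq_neg_one_iff (p := p)).mpr (by rw [H.p_mod_four]; decide))

variable [Fact q.Prime]

lemma isSquare_q (H : IsBiquadraticTriple p q s) : IsSquare (q : ZMod p) := by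
  refine (ZMod.exists_sq_eq_prime_iff_of_mod_four_eq_one H.p_mod_four ?_).mpr H.isSquare₁
  rintro rfl
  exact absurd H.mod_four₁ (by decide)

lemma isSquare_q_padic (H : IsBiquadraticTriple p q s) : IsSquare (q : ℚ_[p]) := by
  exact mod_cast isSquare_padic_of_isSquare_zmod H.p_ne_two
    (not_natCast_dvd_of_prime_ne Fact.out Fact.out H.p_ne_q) (by simpa using H.isSquare_q)

end IsBiquadraticTriple

section RelNorm

variable {R O : Type*} [CommRing R] [IsDedekindDomain R] [CommRing O] [IsDedekindDomain O]
  [Algebra R O] [Module.Finite R O] [Module.IsTorsionFree R O]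

lemma isPrincipal_relNorm_pow {I : Ideal O} {n : ℕ} (h : (I ^ n).IsPrincipal) :
    (Ideal.relNorm R I ^ n).IsPrincipal := by
  obtain ⟨g, hg⟩ := h
  exact ⟨_, by rw [← map_pow, hg, Ideal.submodule_span_eq, Ideal.relNorm_singleton]⟩

lemma idealGenusChar_relNorm [CharZero R] [CharZero O] [Module.Finite ℤ R] [Module.Finite ℤ O]
    (p : ℕ) [Fact p.Prime] (I : Ideal O) :
    idealGenusChar p R (Ideal.relNorm R I) = idealGenusChar p O I :=
  congrArg (genusChar p) (Ideal.absNorm_relNorm R O I)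

end RelNorm

lemma exists_span_sq_eq_span_natCast {R O : Type*} [CommRing R] [CommRing O] [Algebra R O] {n : ℕ}
    (h : ∃ γ : R, Ideal.span {γ} ^ 2 = Ideal.span {(n : R)}) :
    ∃ γ : O, Ideal.span {γ} ^ 2 = Ideal.span {(n : O)} := by
  obtain ⟨γ, hγ⟩ := h
  have hmap := congrArg (Ideal.map (algebraMap R O)) hγ
  rw [Ideal.map_pow, Ideal.map_span, Ideal.map_span, Set.image_singleton, Set.image_singleton,
    map_natCast] at hmap
  exact ⟨_, hmap⟩

namespace BiquadraticRing

variable {O R₁ R₂ R₃ : Type*} [CommRing O] [CommRing R₁] [CommRing R₂] [CommRing R₃]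
  [Algebra R₁ O] [Algebra R₂ O] [Algebra R₃ O] {p q s : ℕ}
  [Fact p.Prime] [Fact q.Prime] [Fact s.Prime]
  [IsDedekindDomain R₁] [CharZero R₁] [Module.Finite ℤ R₁]

section

variable [IsDedekindDomain R₂] [CharZero R₂] [Module.Finite ℤ R₂]
  [IsDedekindDomain R₃] [CharZero R₃] [Module.Finite ℤ R₃]

lemma intNorm_eq_of_absNorm_eq (B : BiquadraticRing O R₁ R₂ R₃ (p * q) (p * s) (q * s))
    (H : IsBiquadraticTriple p q s) {a₁ : R₁} {a₂ : R₂} {a₃ : R₃} (ha₁ : a₁ ≠ 0)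
    (h₂₁ : Ideal.absNorm (Ideal.span {a₂}) = Ideal.absNorm (Ideal.span {a₁}))
    (h₃₁ : Ideal.absNorm (Ideal.span {a₃}) = Ideal.absNorm (Ideal.span {a₁})) :
    Algebra.intNorm ℤ R₂ a₂ = Algebra.intNorm ℤ R₁ a₁ ∧
      Algebra.intNorm ℤ R₃ a₃ = Algebra.intNorm ℤ R₁ a₁ := by
  simp only [QuadraticRing.absNorm_span_singleton] at h₂₁ h₃₁
  have h₁ := B.quad₁.isNormValue_intNorm a₁
  have h₂ := B.quad₂.isNormValue_intNorm a₂
  have h₃ := B.quad₃.isNormValue_intNorm a₃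
  have hn₁ : Algebra.intNorm ℤ R₁ a₁ ≠ 0 := by rwa [ne_eq, Algebra.intNorm_eq_zero]
  have h₃₁' := eq_of_isNormValue_of_natAbs_eq H.mod_four₁
    (not_natCast_dvd_of_prime_ne Fact.out Fact.out H.p_ne_q.symm)
    (not_natCast_dvd_of_prime_ne Fact.out Fact.out H.ne) (by simpa using H.isSquare₁) hn₁ h₂₁ h₃₁
    (mul_comm (p : ℤ) q ▸ h₁) h₂ h₃
  have h₃₂ := eq_of_isNormValue_of_natAbs_eq H.mod_four₂
    (not_natCast_dvd_of_prime_ne Fact.out Fact.out H.p_ne_s.symm)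
    (not_natCast_dvd_of_prime_ne Fact.out Fact.out H.ne.symm) (by simpa using H.isSquare₂)
    (n₁ := Algebra.intNorm ℤ R₂ a₂) (n₂ := Algebra.intNorm ℤ R₁ a₁) (by omega) h₂₁.symm
    (h₃₁.trans h₂₁.symm) (mul_comm (p : ℤ) s ▸ h₂) h₁ (mul_comm (q : ℤ) s ▸ h₃)
  exact ⟨h₃₂ ▸ h₃₁', h₃₁'⟩

end

variable [IsDedekindDomain O] [Module.Finite R₁ O] [Module.IsTorsionFree R₁ O]

lemma isRadical_natCast (B : BiquadraticRing O R₁ R₂ R₃ (p * q) (p * s) (q * s)) {r : ℕ}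
    (hr : r.Prime) (hr2 : r ≠ 2) (hrp : r ≠ p) (hrq : r ≠ q) (hrs : r ≠ s) :
    IsRadical (r : O) := by
  have ndvd {l : ℕ} [Fact l.Prime] (h : r ≠ l) : ¬ (r : ℤ) ∣ l :=
    not_natCast_dvd_of_prime_ne hr Fact.out h
  have hr₁ : IsRadical (r : R₁) := B.quad₁.isRadical_natCast hr <|
    not_natCast_dvd_four_mul hr hr2 (not_natCast_dvd_mul_of_prime_ne hr (ndvd hrp) (ndvd hrq))
  have hcop : IsCoprime (r : ℤ) (4 * (p * s)) :=
    (Nat.prime_iff_prime_int.mp hr).coprime_iff_not_dvd.mpr <| not_natCast_dvd_four_mul hr hr2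
      (not_natCast_dvd_mul_of_prime_ne hr (ndvd hrp) (ndvd hrs))
  have hsqrt := congrArg (algebraMap R₂ O) B.quad₂.sqrt_sq
  rw [map_pow, map_intCast] at hsqrt
  simpa using B.isQuadraticConj₁.isRadical_algebraMap hr₁ (D := 4 * (p * s))
    (y := algebraMap R₂ O B.quad₂.sqrt)
    (by
      rw [B.conj₁_sqrt₂]
      push_cast at hsqrt
      simp only [map_mul, map_ofNat, map_natCast]
      linear_combination 4 * hsqrt)
    (by simpa using hcop.map (Int.castRingHom R₁))

variable [CharZero O] [Module.Finite ℤ O]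

lemma mem_sup_powers_of_sq_eq_span_intCast
    (B : BiquadraticRing O R₁ R₂ R₃ (p * q) (p * s) (q * s)) (H : IsBiquadraticTriple p q s)
    {l : Ideal O} (hl : l ^ 2 = Ideal.span {2}) {m : ℤ} (hm : m ≠ 0) {J : Ideal O}
    (hJ : J ^ 2 = Ideal.span {(m : O)}) :
    J ∈ Ideal.isPrincipalSubmonoid O ⊔ Submonoid.powers l := by
  obtain ⟨a, b, hab⟩ := exists_isUnit_mul_sq_sub_mul_sq H.p_ne_q
    (by have := H.p_mod_four; omega) H.mod_four₁ (.inr ⟨H.mod_eight, H.isSquare_q⟩)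
  obtain ⟨a', b', hab'⟩ := exists_isUnit_mul_sq_sub_mul_sq H.p_ne_s
    (by have := H.p_mod_four; omega) H.mod_four₂ (.inr ⟨H.mod_eight, H.swap.isSquare_q⟩)
  obtain ⟨hp, hq⟩ := B.quad₁.exists_span_sq_eq_span_of_isUnit hab
  obtain ⟨-, hs⟩ := B.quad₂.exists_span_sq_eq_span_of_isUnit hab'
  refine _root_.mem_sup_powers_of_sq_eq_span_intCast hl (fun r hr hr2 ↦ ?_) hm hJ
  by_cases hrp : r = p
  · exact .inr (exists_span_sq_eq_span_natCast (hrp ▸ hp))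
  by_cases hrq : r = q
  · exact .inr (exists_span_sq_eq_span_natCast (hrq ▸ hq))
  by_cases hrs : r = s
  · exact .inr (exists_span_sq_eq_span_natCast (hrs ▸ hs))
  exact .inl (B.isRadical_natCast hr hr2 hrp hrq hrs)

variable [IsDedekindDomain R₂] [CharZero R₂] [Module.Finite ℤ R₂]
  [IsDedekindDomain R₃] [CharZero R₃] [Module.Finite ℤ R₃]
  [Module.Finite R₂ O] [Module.IsTorsionFree R₂ O] [Module.Finite R₃ O] [Module.IsTorsionFree R₃ O]

lemma exists_mul_span_mem_sup_powers
    (B : BiquadraticRing O R₁ R₂ R₃ (p * q) (p * s) (q * s)) (H : IsBiquadraticTriple p q s)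
    {l : Ideal O} (hl : l ^ 2 = Ideal.span {2}) {I : Ideal O} (hI : I ≠ ⊥)
    (hψ : idealGenusChar p O I = 1) {k : ℕ} (hk : (I ^ 2 ^ k).IsPrincipal) :
    ∃ t : O, t ≠ 0 ∧ I * Ideal.span {t} ∈ Ideal.isPrincipalSubmonoid O ⊔ Submonoid.powers l := by
  obtain ⟨a₁, hI₁⟩ := B.quad₁.isPrincipal_of_pow_two_pow H.mod_eight H.mod_four₁ H.isSquare_q
    (I := Ideal.relNorm R₁ I) (by rwa [ne_eq, Ideal.relNorm_eq_bot_iff])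
    (by rwa [idealGenusChar_relNorm]) (isPrincipal_relNorm_pow hk)
  obtain ⟨a₂, hI₂⟩ := B.quad₂.isPrincipal_of_pow_two_pow H.mod_eight H.mod_four₂
    H.swap.isSquare_q (I := Ideal.relNorm R₂ I) (by rwa [ne_eq, Ideal.relNorm_eq_bot_iff])
    (by rwa [idealGenusChar_relNorm]) (isPrincipal_relNorm_pow hk)
  obtain ⟨a₃, hI₃⟩ := B.quad₃.isPrincipal_of_pow_two_pow_of_ne H.ne H.mod_four₁ H.mod_four₂
    (I := Ideal.relNorm R₃ I) (by rwa [ne_eq, Ideal.relNorm_eq_bot_iff])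
    (isPrincipal_relNorm_pow hk)
  rw [Ideal.submodule_span_eq] at hI₁ hI₂ hI₃
  have ha₁ : a₁ ≠ 0 := by
    rwa [ne_eq, ← Ideal.span_singleton_eq_bot, ← hI₁, Ideal.relNorm_eq_bot_iff]
  obtain ⟨h₂, h₃⟩ := B.intNorm_eq_of_absNorm_eq H ha₁ (a₂ := a₂) (a₃ := a₃)
    (by rw [← hI₂, ← hI₁, Ideal.absNorm_relNorm, Ideal.absNorm_relNorm])
    (by rw [← hI₃, ← hI₁, Ideal.absNorm_relNorm, Ideal.absNorm_relNorm])
  obtain ⟨t, ht, m, hm, htm⟩ := B.exists_mul_span_sq_eq_span_intCast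
    (by rwa [ne_eq, Algebra.intNorm_eq_zero]) rfl h₂ h₃ hI₁ hI₂ hI₃
  exact ⟨t, ht, B.mem_sup_powers_of_sq_eq_span_intCast H hl hm htm⟩

end BiquadraticRing

lemma not_isNormValue_two {p : ℕ} [Fact p.Prime] (hp : p % 8 = 5) {e : ℤ} (he : ¬ (p : ℤ) ∣ e) :
    ¬ IsNormValue ℚ_[p] (p * e) 2 := by
  intro h
  have hp2 : p ≠ 2 := by omega
  have hleg := IsNormValue.legendreSym_eq (v := 0) he
    (not_natCast_dvd_of_prime_ne Fact.out Nat.prime_two hp2) (by simpa using h)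
  rw [pow_zero, Nat.cast_ofNat, legendreSym_two_of_mod_eight_eq_five hp] at hleg
  exact absurd hleg (by decide)

lemma IsQuadraticConj.relNorm_eq_of_sq_eq_span {R S : Type*} [CommRing R] [CommRing S] [Algebra R S]
    [IsDedekindDomain R] [IsDedekindDomain S] [Module.Finite R S] [Module.IsTorsionFree R S]
    {σ : S ≃ₐ[R] S} (hσ : IsQuadraticConj σ) {l : Ideal S} {a : R}
    (hl : l ^ 2 = Ideal.span {algebraMap R S a}) : Ideal.relNorm R l = Ideal.span {a} := by
  rw [← pow_left_inj two_ne_zero, ← map_pow, hl, ← Set.image_singleton, ← Ideal.map_span,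
    Ideal.relNorm_algebraMap, hσ.finrank_eq_two]

namespace BiquadraticRing

variable {O R₁ R₂ R₃ : Type*} [CommRing O] [CommRing R₁] [CommRing R₂] [CommRing R₃]
  [Algebra R₁ O] [Algebra R₂ O] [Algebra R₃ O] {p q s : ℕ}
  [Fact p.Prime] [Fact q.Prime] [IsDedekindDomain O]
  [IsDedekindDomain R₃] [CharZero R₃] [Module.Finite ℤ R₃]
  [Module.Finite R₃ O] [Module.IsTorsionFree R₃ O]

lemma not_isSquare_two_mul_map_intNorm
    (B : BiquadraticRing O R₁ R₂ R₃ (p * q) (p * s) (q * s)) (H : IsBiquadraticTriple p q s)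
    (φ : R₃ →+* ℚ_[p]) {w : O} (hw : w ≠ 0) : ¬ IsSquare (2 * φ (Algebra.intNorm R₃ O w)) := by
  rintro ⟨e, he⟩
  have hd : φ (p * q : ℤ) ≠ 0 := by
    rw [map_intCast, Int.cast_ne_zero]
    exact B.quad₁.ne_zero
  have hsqrt : algebraMap R₁ O B.quad₁.sqrt ^ 2 = algebraMap R₃ O (p * q : ℤ) := by
    rw [← map_pow, B.quad₁.sqrt_sq, map_intCast, map_intCast]
  obtain ⟨X, Y, hXY⟩ := B.isQuadraticConj₃.exists_map_intNorm_eq B.conj₃_sqrt₁ hsqrt φ hd w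
  have hN : φ (Algebra.intNorm R₃ O w) ≠ 0 := by
    rwa [map_ne_zero_iff _ (B.quad₃.map_injective φ), ne_eq, Algebra.intNorm_eq_zero]
  have he0 : e ≠ 0 := by
    rintro rfl
    simp [hN] at he
  refine not_isNormValue_two H.mod_eight (not_natCast_dvd_of_prime_ne Fact.out Fact.out H.p_ne_q)
    ⟨2 * X / e, 2 * Y / e, ?_⟩
  rw [hXY, map_intCast] at he
  field_simp
  push_cast at he ⊢
  linear_combination -2 * he

variable [Fact s.Prime]

lemma span_mul_sq_ne_span_mul (B : BiquadraticRing O R₁ R₂ R₃ (p * q) (p * s) (q * s))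
    (H : IsBiquadraticTriple p q s) {l : Ideal O} (hl : l ^ 2 = Ideal.span {2}) {I : Ideal O}
    (hI : I ≠ ⊥) {k : ℕ} (hk : (I ^ 2 ^ k).IsPrincipal) {a b : O} (ha : a ≠ 0) (hb : b ≠ 0) :
    Ideal.span {a} * I ^ 2 ≠ Ideal.span {b} * l := by
  intro h
  obtain ⟨β, hβ⟩ := B.quad₃.isPrincipal_of_pow_two_pow_of_ne H.ne H.mod_four₁ H.mod_four₂
    (I := Ideal.relNorm R₃ I) (by rwa [ne_eq, Ideal.relNorm_eq_bot_iff])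
    (isPrincipal_relNorm_pow hk)
  have hl₃ : Ideal.relNorm R₃ l = Ideal.span {2} :=
    B.isQuadraticConj₃.relNorm_eq_of_sq_eq_span (by rwa [map_ofNat])
  obtain ⟨u, hu⟩ : Associated (Algebra.intNorm R₃ O a * β ^ 2) (Algebra.intNorm R₃ O b * 2) := by
    have hnorm := congrArg (Ideal.relNorm R₃) h
    rwa [map_mul, map_mul, map_pow, hβ, hl₃, Ideal.relNorm_singleton, Ideal.relNorm_singleton,
      Ideal.submodule_span_eq, Ideal.span_singleton_pow, Ideal.span_singleton_mul_span_singleton,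
      Ideal.span_singleton_mul_span_singleton, Ideal.span_singleton_eq_span_singleton] at hnorm
  obtain ⟨φ⟩ := B.quad₃.exists_ringHom (K := ℚ_[p]) (by
    push_cast
    exact H.isSquare_q_padic.mul H.swap.isSquare_q_padic)
  obtain ⟨c, hc⟩ := B.quad₃.isSquare_map_of_isUnit H.ne H.mod_four₁ H.mod_four₂
    H.isSquare_neg_one_padic H.isSquare_q_padic H.swap.isSquare_q_padic φ u.isUnit
  refine B.not_isSquare_two_mul_map_intNorm H φ (mul_ne_zero ha hb)
    ⟨φ (Algebra.intNorm R₃ O a) * φ β * c, ?_⟩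
  have hφ := congrArg φ hu
  simp only [map_mul, map_pow, map_ofNat, hc] at hφ ⊢
  linear_combination -φ (Algebra.intNorm R₃ O a) * hφ

end BiquadraticRing

/-! ### A totally split prime of nontrivial genus -/

lemma exists_prime_modEq {ι : Type*} (T : Finset ι) {m a : ι → ℕ} (hm : ∀ i ∈ T, m i ≠ 0)
    (hcop : Set.Pairwise (T : Set ι) (Function.onFun Nat.Coprime m))
    (ha : ∀ i ∈ T, (a i).Coprime (m i)) : ∃ r, r.Prime ∧ ∀ i ∈ T, r ≡ a i [MOD m i] := by
  obtain ⟨k, hk⟩ := Nat.chineseRemainderOfFinset a m T hm hcop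
  obtain ⟨r, -, hr, hrk⟩ := Nat.forall_exists_prime_gt_and_modEq 0 (Finset.prod_ne_zero_iff.mpr hm)
    (Nat.Coprime.prod_right fun i hi ↦ (hk i hi).gcd_eq.trans (ha i hi))
  exact ⟨r, hr, fun i hi ↦ (hrk.of_dvd (Finset.dvd_prod_of_mem m hi)).trans (hk i hi)⟩

lemma exists_coprime_not_isSquare {l : ℕ} (hl : l.Prime) (hl2 : l ≠ 2) :
    ∃ a : ℕ, a.Coprime l ∧ ¬ IsSquare (a : ZMod l) := by
  have := Fact.mk hl
  obtain ⟨a, ha⟩ := FiniteField.exists_nonsquare (F := ZMod l) (by rwa [ZMod.ringChar_zmod_n])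
  refine ⟨a.val, ?_, by rwa [ZMod.natCast_zmod_val]⟩
  exact (ZMod.val_coe_unit_coprime (Units.mk0 a (by rintro rfl; exact ha .zero)))

lemma exists_prime_mod_four_eq_one_and_not_isSquare (T : Finset ℕ)
    (hT : ∀ l ∈ T, l.Prime ∧ l ≠ 2) :
    ∃ r : ℕ, r.Prime ∧ r % 4 = 1 ∧ ∀ l ∈ T, ¬ IsSquare (r : ZMod l) := by
  choose! a ha_coprime ha_nonsquare using
    fun l (hl : l ∈ T) ↦ exists_coprime_not_isSquare (hT l hl).1 (hT l hl).2
  have h4 : 4 ∉ T := fun h ↦ absurd (hT 4 h).1 (by decide)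
  have hcop : ∀ l ∈ T, Nat.Coprime 4 l := fun l hl ↦
    Nat.Coprime.pow_left 2 ((Nat.coprime_primes Nat.prime_two (hT l hl).1).mpr (hT l hl).2.symm)
  obtain ⟨r, hr, hra⟩ := exists_prime_modEq (insert 4 T) (m := id) (a := Function.update a 4 1)
    (by simpa using fun l hl ↦ (hT l hl).1.ne_zero)
    (by
      have : Std.Symm (Function.onFun Nat.Coprime id) := ⟨fun _ _ ↦ Nat.Coprime.symm⟩
      rw [Finset.coe_insert, Set.pairwise_insert_of_symm_of_notMem (by simpa using h4)]
      exact ⟨fun l hl l' hl' h ↦ (Nat.coprime_primes (hT l hl).1 (hT l' hl').1).mpr h, hcop⟩)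
    (by
      rw [Finset.forall_mem_insert]
      refine ⟨by simp, fun l hl ↦ ?_⟩
      rw [Function.update_of_ne (ne_of_mem_of_not_mem hl h4)]
      exact ha_coprime l hl)
  rw [Finset.forall_mem_insert, Function.update_self] at hra
  refine ⟨r, hr, hra.1, fun l hl ↦ ?_⟩
  have hrl := hra.2 l hl
  rw [Function.update_of_ne (ne_of_mem_of_not_mem hl h4)] at hrl
  rw [(ZMod.natCast_eq_natCast_iff r (a l) l).mpr hrl]
  exact ha_nonsquare l hl

lemma not_dvd_mul_of_not_isSquare {r : ℕ} [Fact r.Prime] {a b : ℤ}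
    (ha : ¬ IsSquare (a : ZMod r)) (hb : ¬ IsSquare (b : ZMod r)) : ¬ (r : ℤ) ∣ a * b := by
  rw [← ZMod.intCast_zmod_eq_zero_iff_dvd, Int.cast_mul, mul_eq_zero]
  rintro (h | h)
  · exact ha (h ▸ .zero)
  · exact hb (h ▸ .zero)

lemma isSquare_mul_of_not_isSquare {r : ℕ} [Fact r.Prime] {a b : ℤ}
    (ha : ¬ IsSquare (a : ZMod r)) (hb : ¬ IsSquare (b : ZMod r)) :
    IsSquare ((a * b : ℤ) : ZMod r) := by
  rw [← legendreSym.eq_one_iff r (intCast_zmod_ne_zero (not_dvd_mul_of_not_isSquare ha hb)),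
    legendreSym.mul, (legendreSym.eq_neg_one_iff r).mpr ha, (legendreSym.eq_neg_one_iff r).mpr hb]
  rfl

lemma IsBiquadraticTriple.exists_prime_split {p q s : ℕ} (H : IsBiquadraticTriple p q s)
    (hp : p.Prime) (hq : q.Prime) (hs : s.Prime) :
    ∃ r : ℕ, r.Prime ∧ r ≠ 2 ∧ ¬ IsSquare (r : ZMod p) ∧
      ¬ (r : ℤ) ∣ p * q ∧ ¬ (r : ℤ) ∣ p * s ∧
      IsSquare ((p * q : ℤ) : ZMod r) ∧ IsSquare ((p * s : ℤ) : ZMod r) := by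
  have hT : ∀ l ∈ ({p, q, s} : Finset ℕ), l.Prime ∧ l ≠ 2 := by
    have := H.mod_four₁
    have := H.mod_four₂
    simp only [Finset.mem_insert, Finset.mem_singleton]
    rintro l (rfl | rfl | rfl)
    · exact ⟨hp, H.p_ne_two⟩
    · exact ⟨hq, by omega⟩
    · exact ⟨hs, by omega⟩
  obtain ⟨r, hr, hr4, hns⟩ := exists_prime_mod_four_eq_one_and_not_isSquare {p, q, s} hT
  have := Fact.mk hr
  have hrecip : ∀ l ∈ ({p, q, s} : Finset ℕ), ¬ IsSquare ((l : ℤ) : ZMod r) := by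
    intro l hl
    have := Fact.mk (hT l hl).1
    rw [Int.cast_natCast, ZMod.exists_sq_eq_prime_iff_of_mod_four_eq_one hr4 (hT l hl).2]
    exact hns l hl
  exact ⟨r, hr, by omega, hns p (by simp),
    not_dvd_mul_of_not_isSquare (hrecip p (by simp)) (hrecip q (by simp)),
    not_dvd_mul_of_not_isSquare (hrecip p (by simp)) (hrecip s (by simp)),
    isSquare_mul_of_not_isSquare (hrecip p (by simp)) (hrecip q (by simp)),
    isSquare_mul_of_not_isSquare (hrecip p (by simp)) (hrecip s (by simp))⟩

lemma charP_quotient_of_liesOver {O : Type*} [CommRing O] (P : Ideal O) (r : ℕ)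
    [P.LiesOver (Ideal.span {(r : ℤ)})] : CharP (O ⧸ P) r := by
  refine ⟨fun n ↦ ?_⟩
  rw [← map_natCast (Ideal.Quotient.mk P), Ideal.Quotient.eq_zero_iff_mem,
    ← Int.natCast_dvd_natCast, ← Ideal.mem_span_singleton,
    Ideal.mem_of_liesOver P (Ideal.span {(r : ℤ)}) (n : ℤ), algebraMap_int_eq, eq_intCast,
    Int.cast_natCast]

section SplitPrime

variable {O R₁ R₂ R₃ K k : Type*} [CommRing O] [CommRing R₁] [CommRing R₂] [CommRing R₃]
  [Algebra R₁ O] [Algebra R₂ O] [Algebra R₃ O] {d d₁ d₂ d₃ : ℤ} [Field K] [Field k]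
  [IsDedekindDomain R₁] [CharZero R₁] [Module.Finite ℤ R₁]

lemma QuadraticRing.map_mem_fieldRange (A : QuadraticRing R₁ d) {ψ : K →+* k} (h2 : (2 : K) ≠ 0)
    (hd : (d : K) ≠ 0) (hsq : IsSquare (d : K)) (φ : R₁ →+* k) (w : R₁) : φ w ∈ ψ.fieldRange := by
  have hsqrt : φ A.sqrt ^ 2 = ψ d := by rw [← map_pow, A.sqrt_sq, map_intCast, map_intCast]
  refine A.isQuadraticConj.map_mem_subfield ?_ φ (fun a ↦ ?_) A.conj_sqrt
    (mem_fieldRange_of_sq_eq ψ hsq hsqrt) (fun h ↦ ?_) w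
  · rwa [← map_ofNat ψ 2, map_ne_zero]
  · rw [algebraMap_int_eq, eq_intCast, map_intCast]
    exact intCast_mem _ a
  · rw [h, zero_pow two_ne_zero, eq_comm, map_eq_zero] at hsqrt
    exact hd hsqrt

namespace BiquadraticRing

variable [IsDedekindDomain O] [Module.Finite R₁ O] [Module.IsTorsionFree R₁ O]
  [IsDedekindDomain R₂] [CharZero R₂] [Module.Finite ℤ R₂]

lemma map_mem_fieldRange (B : BiquadraticRing O R₁ R₂ R₃ d₁ d₂ d₃) {ψ : K →+* k}
    (h2 : (2 : K) ≠ 0) (hd₁ : (d₁ : K) ≠ 0) (hd₂ : (d₂ : K) ≠ 0) (hsq₁ : IsSquare (d₁ : K))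
    (hsq₂ : IsSquare (d₂ : K)) (φ : O →+* k) (w : O) : φ w ∈ ψ.fieldRange := by
  refine B.isQuadraticConj₁.map_mem_subfield ?_ φ
    (B.quad₁.map_mem_fieldRange h2 hd₁ hsq₁ (φ.comp (algebraMap R₁ O))) B.conj₁_sqrt₂
    (B.quad₂.map_mem_fieldRange h2 hd₂ hsq₂ (φ.comp (algebraMap R₂ O)) _) (fun h ↦ ?_) w
  · rwa [← map_ofNat ψ 2, map_ne_zero]
  · have hsqrt : φ (algebraMap R₂ O B.quad₂.sqrt) ^ 2 = ψ d₂ := by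
      rw [← map_pow, ← map_pow, B.quad₂.sqrt_sq, map_intCast, map_intCast, map_intCast]
    rw [h, zero_pow two_ne_zero, eq_comm, map_eq_zero] at hsqrt
    exact hd₂ hsqrt

variable [Module.Free ℤ O]

lemma absNorm_eq_of_liesOver (B : BiquadraticRing O R₁ R₂ R₃ d₁ d₂ d₃) {r : ℕ} [Fact r.Prime]
    (hr2 : r ≠ 2) (hd₁ : ¬ (r : ℤ) ∣ d₁) (hd₂ : ¬ (r : ℤ) ∣ d₂) (hsq₁ : IsSquare (d₁ : ZMod r))
    (hsq₂ : IsSquare (d₂ : ZMod r)) (P : Ideal O) [P.IsMaximal]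
    [P.LiesOver (Ideal.span {(r : ℤ)})] : Ideal.absNorm P = r := by
  let _ : Field (O ⧸ P) := Ideal.Quotient.field P
  have := charP_quotient_of_liesOver P r
  have h2 : (2 : ZMod r) ≠ 0 := by
    have := intCast_zmod_ne_zero (not_natCast_dvd_of_prime_ne Fact.out Nat.prime_two hr2)
    simpa using this
  have hbij : Function.Bijective (ZMod.castHom (dvd_refl r) (O ⧸ P)) := by
    refine ⟨RingHom.injective _, fun z ↦ ?_⟩
    obtain ⟨w, rfl⟩ := Ideal.Quotient.mk_surjective z
    exact B.map_mem_fieldRange h2 (intCast_zmod_ne_zero hd₁) (intCast_zmod_ne_zero hd₂) hsq₁ hsq₂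
      (Ideal.Quotient.mk P) w
  rw [Ideal.absNorm_apply, Submodule.cardQuot_apply, ← Nat.card_eq_of_bijective _ hbij,
    Nat.card_zmod]

theorem exists_idealGenusChar_eq_neg_one {p q s : ℕ} [Fact p.Prime]
    (B : BiquadraticRing O R₁ R₂ R₃ (p * q) (p * s) d₃) (H : IsBiquadraticTriple p q s)
    (hq : q.Prime) (hs : s.Prime) : ∃ I : Ideal O, I ≠ ⊥ ∧ idealGenusChar p O I = -1 := by
  obtain ⟨r, hr, hr2, hrp, hd₁, hd₂, hsq₁, hsq₂⟩ := H.exists_prime_split Fact.out hq hs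
  have := Fact.mk hr
  have : Module.Finite ℤ O := .trans R₁ O
  obtain ⟨P, hP, hPr⟩ := Ideal.exists_maximal_ideal_liesOver_of_isIntegral (S := O)
    (Ideal.span {(r : ℤ)})
  have hnorm := B.absNorm_eq_of_liesOver hr2 hd₁ hd₂ hsq₁ hsq₂ P
  refine ⟨P, fun h ↦ hr.ne_zero ?_, ?_⟩
  · rw [← hnorm, h, Ideal.absNorm_bot]
  · have hpr : ¬ p ∣ r := fun h ↦ hrp (((ZMod.natCast_eq_zero_iff r p).mpr h) ▸ .zero)
    rw [← Int.cast_natCast] at hrp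
    refine (congrArg (genusChar p) hnorm).trans ?_
    rwa [genusChar_of_not_dvd hpr, legendreSym.eq_neg_one_iff]

end BiquadraticRing

end SplitPrime

/-! ### The class group of a biquadratic ring -/

lemma exists_classGroup_monoidHom {R M : Type*} [CommRing R] [IsDedekindDomain R] [MulOneClass M]
    (f : Ideal R →* M) (hf : ∀ g ≠ 0, f (Ideal.span {g}) = 1) :
    ∃ F : ClassGroup R →* M, ∀ I, F (ClassGroup.mk0 I) = f I := by
  let π : nonZeroDivisors (Ideal R) →* ClassGroup R := ClassGroup.mk0
  let f₀ : nonZeroDivisors (Ideal R) →* M := f.comp (Submonoid.subtype _)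
  have hker : Con.ker π ≤ Con.ker f₀ := by
    intro I J hIJ
    obtain ⟨x, y, hx, hy, hxy⟩ := ClassGroup.mk0_eq_mk0_iff.mp ((Con.ker_rel π).mp hIJ)
    have hmap := congrArg f hxy
    rw [map_mul, map_mul, hf x hx, hf y hy, one_mul, one_mul] at hmap
    exact (Con.ker_rel f₀).mpr hmap
  let e := Con.quotientKerEquivOfSurjective π ClassGroup.mk0_surjective
  refine ⟨((Con.ker π).lift f₀ hker).comp e.symm.toMonoidHom, fun I ↦ ?_⟩
  have he : e.symm (ClassGroup.mk0 I) = (I : (Con.ker π).Quotient) := e.symm_apply_eq.mpr rfl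
  exact (congrArg _ he).trans (Con.lift_coe hker I)

lemma isKleinFour_of_forall_mem_ker {G : Type*} [Group G] {f : G →* ℤˣ}
    (hf : Function.Surjective f) {l : G} (hl : f l = 1) (hker : ∀ g, f g = 1 → g = 1 ∨ g = l)
    (hsq : ∀ g, g ^ 2 ≠ l) : IsKleinFour G := by
  have hl1 : l ≠ 1 := fun h ↦ hsq 1 (by rw [one_pow, h])
  have hcard_ker : Nat.card f.ker = 2 := by
    refine (Nat.card_eq_two_iff' 1).mpr ⟨⟨l, hl⟩, fun h ↦ hl1 (congrArg Subtype.val h), ?_⟩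
    rintro ⟨g, hg⟩ hg1
    exact Subtype.ext ((hker g hg).resolve_left fun h ↦ hg1 (Subtype.ext h))
  have hcard : Nat.card G = 4 := by
    rw [← f.ker.card_mul_index, hcard_ker, Subgroup.index_ker, MonoidHom.range_eq_top.mpr hf,
      Subgroup.card_top, Nat.card_eq_fintype_card, Fintype.card_units_int]
  have hexp (g : G) : g ^ 2 = 1 :=
    (hker (g ^ 2) (by rw [map_pow, Int.units_sq])).resolve_right (hsq g)
  have : Nontrivial G := ⟨l, 1, hl1⟩
  refine ⟨hcard, (Monoid.exponent_eq_prime_iff Nat.prime_two).mpr fun g hg ↦ ?_⟩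
  exact orderOf_eq_prime (hexp g) hg

section Sylow

variable {G : Type*} [CommGroup G] [Finite G] (P : Sylow 2 G)

lemma odd_index_sylow_two : Odd (P : Subgroup G).index := by
  rw [← Nat.not_even_iff_odd, even_iff_two_dvd]
  exact P.not_dvd_index

lemma mem_sylow_two_of_sq_eq_one {g : G} (hg : g ^ 2 = 1) : g ∈ P := by
  obtain ⟨m, hm⟩ := odd_index_sylow_two P
  have hmem := (P : Subgroup G).pow_index_mem g
  rwa [hm, pow_succ, pow_mul, hg, one_pow, one_mul] at hmem

lemma surjective_comp_subtype_sylow_two {f : G →* ℤˣ} {r : G} (hr : f r = -1) :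
    Function.Surjective (f.comp (P : Subgroup G).subtype) := by
  intro u
  obtain rfl | rfl := Int.units_eq_one_or u
  · exact ⟨1, map_one _⟩
  · exact ⟨⟨_, (P : Subgroup G).pow_index_mem r⟩,
      by rw [MonoidHom.comp_apply, Subgroup.subtype_apply, map_pow, hr,
        (odd_index_sylow_two P).neg_one_pow]⟩

lemma nonempty_sylow_two_mulEquiv {f : G →* ℤˣ} {r l : G} (hr : f r = -1) (hl : f l = 1)
    (hl2 : l ^ 2 = 1) (hker : ∀ g k, g ^ 2 ^ k = 1 → f g = 1 → g = 1 ∨ g = l)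
    (hsq : ∀ g k, g ^ 2 ^ k = 1 → g ^ 2 ≠ l) :
    Nonempty (P ≃* Multiplicative (ZMod 2) × Multiplicative (ZMod 2)) := by
  have hpow (g : P) : ∃ k, (g : G) ^ 2 ^ k = 1 :=
    (P.isPGroup' g).imp fun k hk ↦ by simpa using congrArg Subtype.val hk
  have : IsKleinFour P := by
    refine isKleinFour_of_forall_mem_ker (surjective_comp_subtype_sylow_two P hr)
      (l := ⟨l, mem_sylow_two_of_sq_eq_one P hl2⟩) hl (fun g hg ↦ ?_) fun g hgl ↦ ?_
    · obtain ⟨k, hk⟩ := hpow g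
      exact (hker g k hk hg).imp Subtype.ext Subtype.ext
    · obtain ⟨k, hk⟩ := hpow g
      exact hsq g k hk (congrArg Subtype.val hgl)
  obtain ⟨e⟩ := IsKleinFour.nonempty_mulEquiv (G₁ := P) (G₂ := Multiplicative (ZMod 2 × ZMod 2))
  exact ⟨e.trans (MulEquiv.prodMultiplicative _ _)⟩

end Sylow

namespace BiquadraticRing

variable {O R₁ R₂ R₃ : Type*} [CommRing O] [CommRing R₁] [CommRing R₂] [CommRing R₃]
  [Algebra R₁ O] [Algebra R₂ O] [Algebra R₃ O] {d₁ d₂ d₃ : ℤ} {p q s : ℕ}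

lemma exists_sq_eq_span_two (B : BiquadraticRing O R₁ R₂ R₃ d₁ d₂ d₃) (hd₁ : d₁ % 4 = 3) :
    ∃ l : Ideal O, l ^ 2 = Ideal.span {2} := by
  refine ⟨_, span_two_one_add_sq (x := algebraMap R₁ O B.quad₁.sqrt) ?_ hd₁⟩
  rw [← map_pow, B.quad₁.sqrt_sq, map_intCast]

section

variable [IsDedekindDomain O] [CharZero O] [IsDedekindDomain R₃] [CharZero R₃]
  [Module.Finite ℤ R₃] [Module.Finite R₃ O] [Module.IsTorsionFree R₃ O]
  [Fact p.Prime] [Fact q.Prime] [Fact s.Prime]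

lemma mk0_sq_ne (B : BiquadraticRing O R₁ R₂ R₃ (p * q) (p * s) (q * s))
    (H : IsBiquadraticTriple p q s) {l : nonZeroDivisors (Ideal O)}
    (hl : (l : Ideal O) ^ 2 = Ideal.span {2}) {I : nonZeroDivisors (Ideal O)} {k : ℕ}
    (hk : ClassGroup.mk0 I ^ 2 ^ k = 1) : ClassGroup.mk0 I ^ 2 ≠ ClassGroup.mk0 l := by
  rw [← map_pow, ClassGroup.mk0_eq_one_iff] at hk
  rw [← map_pow, ne_eq, ClassGroup.mk0_eq_mk0_iff]
  rintro ⟨a, b, ha, hb, hab⟩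
  exact B.span_mul_sq_ne_span_mul H hl (nonZeroDivisors.ne_zero I.2) hk ha hb hab

end

variable [IsDedekindDomain O] [CharZero O] [Module.Finite ℤ O]
  [IsDedekindDomain R₁] [CharZero R₁] [Module.Finite ℤ R₁] [Module.Finite R₁ O]
  [Module.IsTorsionFree R₁ O] [Fact p.Prime]

lemma idealGenusChar_eq_one_of_sq_eq_span_two (B : BiquadraticRing O R₁ R₂ R₃ d₁ d₂ d₃)
    {l : Ideal O} (hl : l ^ 2 = Ideal.span {2}) : idealGenusChar p O l = 1 := by
  rw [← idealGenusChar_relNorm (R := R₁),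
    B.isQuadraticConj₁.relNorm_eq_of_sq_eq_span (a := 2) (by rwa [map_ofNat])]
  calc genusChar p (Ideal.absNorm (Ideal.span {(2 : R₁)}))
      = genusChar p 2 ^ 2 := by rw [B.quad₁.absNorm_span_two, ← map_pow]; rfl
    _ = 1 := genusChar_sq two_ne_zero

variable [Fact q.Prime]

lemma idealGenusChar_span_singleton (B : BiquadraticRing O R₁ R₂ R₃ (p * q) d₂ d₃)
    (H : IsBiquadraticTriple p q s) {g : O} (hg : g ≠ 0) :
    idealGenusChar p O (Ideal.span {g}) = 1 := by
  have hsq : IsSquare ((q : ℤ) : ZMod p) := by simpa using H.isSquare_q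
  rw [← idealGenusChar_relNorm (R := R₁), Ideal.relNorm_singleton]
  exact B.quad₁.idealGenusChar_span_singleton H.p_mod_four
    (not_natCast_dvd_of_prime_ne Fact.out Fact.out H.p_ne_q) hsq
    (by rwa [ne_eq, Algebra.intNorm_eq_zero])

variable [Fact s.Prime] [IsDedekindDomain R₂] [CharZero R₂] [Module.Finite ℤ R₂]
  [IsDedekindDomain R₃] [CharZero R₃] [Module.Finite ℤ R₃]
  [Module.Finite R₂ O] [Module.IsTorsionFree R₂ O] [Module.Finite R₃ O] [Module.IsTorsionFree R₃ O]

lemma mk0_eq_one_or (B : BiquadraticRing O R₁ R₂ R₃ (p * q) (p * s) (q * s))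
    (H : IsBiquadraticTriple p q s) {l : nonZeroDivisors (Ideal O)}
    (hl : (l : Ideal O) ^ 2 = Ideal.span {2}) {I : nonZeroDivisors (Ideal O)} {k : ℕ}
    (hk : ClassGroup.mk0 I ^ 2 ^ k = 1) (hψ : idealGenusChar p O I = 1) :
    ClassGroup.mk0 I = 1 ∨ ClassGroup.mk0 I = ClassGroup.mk0 l := by
  rw [← map_pow, ClassGroup.mk0_eq_one_iff] at hk
  obtain ⟨t, ht, hmem⟩ :=
    B.exists_mul_span_mem_sup_powers H hl (nonZeroDivisors.ne_zero I.2) hψ hk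
  obtain ⟨g, hg⟩ | ⟨g, hg⟩ := isPrincipal_or_of_mem_sup_powers hl hmem
  · exact .inl ((ClassGroup.mk0_eq_one_iff I.2).mpr (isPrincipal_of_mul_span_eq_span ht hg))
  · refine .inr (ClassGroup.mk0_eq_mk0_iff.mpr ⟨t, g, ht, ?_, by rw [mul_comm, hg]⟩)
    rintro rfl
    rw [Ideal.span_singleton_zero, Ideal.bot_mul] at hg
    exact mul_ne_zero (nonZeroDivisors.ne_zero I.2) (by simpa using ht) hg

theorem nonempty_sylow_two_classGroup_mulEquiv [Finite (ClassGroup O)]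
    (B : BiquadraticRing O R₁ R₂ R₃ (p * q) (p * s) (q * s)) (H : IsBiquadraticTriple p q s)
    (P : Sylow 2 (ClassGroup O)) :
    Nonempty (P ≃* Multiplicative (ZMod 2) × Multiplicative (ZMod 2)) := by
  obtain ⟨l, hl⟩ := B.exists_sq_eq_span_two (by
    norm_cast
    rw [Nat.mul_mod, H.p_mod_four, H.mod_four₁])
  have hl0 : l ≠ 0 := by
    rintro rfl
    rw [zero_pow two_ne_zero, eq_comm, Ideal.zero_eq_bot, Ideal.span_singleton_eq_bot] at hl
    exact two_ne_zero hl
  lift l to nonZeroDivisors (Ideal O) using mem_nonZeroDivisors_of_ne_zero hl0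
  obtain ⟨F, hF⟩ := exists_classGroup_monoidHom (idealGenusChar p O)
    fun g hg ↦ B.idealGenusChar_span_singleton H hg
  obtain ⟨I, hI0, hI⟩ := B.exists_idealGenusChar_eq_neg_one H Fact.out Fact.out
  lift I to nonZeroDivisors (Ideal O) using mem_nonZeroDivisors_of_ne_zero hI0
  refine nonempty_sylow_two_mulEquiv P (f := F.toHomUnits) (r := ClassGroup.mk0 I)
    (l := ClassGroup.mk0 l) (Units.ext ((hF I).trans hI))
    (Units.ext ((hF l).trans (B.idealGenusChar_eq_one_of_sq_eq_span_two hl))) ?_ ?_ ?_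
  · rw [← map_pow, ClassGroup.mk0_eq_one_iff]
    exact ⟨2, hl⟩
  · intro g k hg hFg
    obtain ⟨J, rfl⟩ := ClassGroup.mk0_surjective g
    exact B.mk0_eq_one_or H hl hg ((hF J).symm.trans (congrArg Units.val hFg))
  · intro g k hg
    obtain ⟨J, rfl⟩ := ClassGroup.mk0_surjective g
    exact B.mk0_sq_ne H hl hg

end BiquadraticRing

/-! ### The biquadratic field -/

section FieldConj

open IntermediateField

variable {k L : Type*} [Field k] [Field L] [Algebra k L] {u v : L}

lemma adjoin_eq_top_of_adjoin_image_eq {K : IntermediateField k L} {S : Set K}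
    (h : adjoin k (Subtype.val '' S) = K) : adjoin k S = ⊤ := by
  apply lift_injective
  rw [lift_adjoin, lift_top, h]

lemma finrank_adjoin_simple_of_sq_mem_bot (hu : u ^ 2 ∈ (⊥ : IntermediateField k L))
    (hn : u ∉ (⊥ : IntermediateField k L)) : Module.finrank k k⟮u⟯ = 2 := by
  obtain ⟨c, hc⟩ := mem_bot.mp hu
  have hmonic : (Polynomial.X ^ 2 - Polynomial.C c).Monic :=
    Polynomial.monic_X_pow_sub_C c two_ne_zero
  have hroot : Polynomial.aeval u (Polynomial.X ^ 2 - Polynomial.C c) = 0 := by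
    rw [map_sub, map_pow, Polynomial.aeval_X, Polynomial.aeval_C, hc, sub_self]
  have hintegral : IsIntegral k u := ⟨_, hmonic, hroot⟩
  have hle := Polynomial.natDegree_le_of_dvd (minpoly.dvd k u hroot) hmonic.ne_zero
  rw [Polynomial.natDegree_X_pow_sub_C] at hle
  have hpos := minpoly.natDegree_pos hintegral
  have hne : (minpoly k u).natDegree ≠ 1 := fun h ↦
    hn (mem_bot.mpr (minpoly.natDegree_eq_one_iff.mp h))
  rw [adjoin.finrank hintegral]
  omega

variable [CharZero k]

lemma exists_isQuadraticConj_apply_eq_neg (hu : u ^ 2 ∈ (⊥ : IntermediateField k L))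
    (hn : u ∉ (⊥ : IntermediateField k L)) (htop : k⟮u⟯ = ⊤) :
    ∃ σ : L ≃ₐ[k] L, IsQuadraticConj σ ∧ σ u = -u := by
  have hrank : Module.finrank k L = 2 := by
    rw [← finrank_top', ← htop, finrank_adjoin_simple_of_sq_mem_bot hu hn]
  have : Algebra.IsQuadraticExtension k L := ⟨hrank⟩
  rw [IsGalois.mem_bot_iff_fixed] at hn
  push Not at hn
  obtain ⟨σ, hσ⟩ := hn
  obtain ⟨c, hc⟩ := mem_bot.mp hu
  have hsq : σ u ^ 2 = u ^ 2 := by rw [← map_pow, ← hc, σ.commutes]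
  refine ⟨σ, ⟨hrank, ?_⟩, (sq_eq_sq_iff_eq_or_eq_neg.mp hsq).resolve_left hσ⟩
  rintro rfl
  exact hσ rfl

lemma exists_isQuadraticConj_gen_eq_neg (hu : u ^ 2 ∈ (⊥ : IntermediateField k L))
    (hn : u ∉ (⊥ : IntermediateField k L)) :
    ∃ σ : k⟮u⟯ ≃ₐ[k] k⟮u⟯, IsQuadraticConj σ ∧
      σ (AdjoinSimple.gen k u) = -AdjoinSimple.gen k u := by
  apply exists_isQuadraticConj_apply_eq_neg
  · obtain ⟨c, hc⟩ := mem_bot.mp hu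
    exact mem_bot.mpr ⟨c, Subtype.ext hc⟩
  · intro h
    obtain ⟨c, hc⟩ := mem_bot.mp h
    exact hn (mem_bot.mpr ⟨c, congrArg Subtype.val hc⟩)
  · apply adjoin_eq_top_of_adjoin_image_eq
    rw [Set.image_singleton, AdjoinSimple.coe_gen]

lemma notMem_adjoin_simple_of_sq_mem_bot (hu : u ^ 2 ∈ (⊥ : IntermediateField k L))
    (hv : v ^ 2 ∈ (⊥ : IntermediateField k L)) (hun : u ∉ (⊥ : IntermediateField k L))
    (hvn : v ∉ (⊥ : IntermediateField k L)) (huvn : u * v ∉ (⊥ : IntermediateField k L)) :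
    v ∉ k⟮u⟯ := by
  intro hmem
  obtain ⟨σ, hσ, hσu⟩ := exists_isQuadraticConj_gen_eq_neg hu hun
  have : FiniteDimensional k k⟮u⟯ := Module.finite_of_finrank_eq_succ hσ.finrank_eq_two
  have mem_bot_of_fixed {w : k⟮u⟯} (hw : σ w = w) : (w : L) ∈ (⊥ : IntermediateField k L) := by
    obtain ⟨a, ha⟩ := hσ.exists_algebraMap_eq hw
    exact mem_bot.mpr ⟨a, congrArg Subtype.val ha⟩
  obtain ⟨c, hc⟩ := mem_bot.mp hv
  have hsq : σ ⟨v, hmem⟩ ^ 2 = ⟨v, hmem⟩ ^ 2 := by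
    have hv' : (⟨v, hmem⟩ : k⟮u⟯) ^ 2 = algebraMap k k⟮u⟯ c := Subtype.ext hc.symm
    rw [← map_pow, hv', σ.commutes]
  rcases sq_eq_sq_iff_eq_or_eq_neg.mp hsq with h | h
  · exact hvn (mem_bot_of_fixed h)
  · have huv := mem_bot_of_fixed (w := AdjoinSimple.gen k u * ⟨v, hmem⟩)
      (by rw [map_mul, hσu, h, neg_mul_neg])
    exact huvn (by simpa using huv)

lemma exists_isQuadraticConj_adjoin_simple_apply_eq_neg
    (hu : u ^ 2 ∈ (⊥ : IntermediateField k L)) (hv : v ^ 2 ∈ (⊥ : IntermediateField k L))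
    (hun : u ∉ (⊥ : IntermediateField k L)) (hvn : v ∉ (⊥ : IntermediateField k L))
    (huvn : u * v ∉ (⊥ : IntermediateField k L)) (htop : k⟮u, v⟯ = ⊤) :
    ∃ σ : L ≃ₐ[k⟮u⟯] L, IsQuadraticConj σ ∧ σ v = -v := by
  apply exists_isQuadraticConj_apply_eq_neg
  · obtain ⟨c, hc⟩ := mem_bot.mp hv
    exact mem_bot.mpr ⟨algebraMap k k⟮u⟯ c, hc⟩
  · intro h
    obtain ⟨w, hw⟩ := mem_bot.mp h
    exact notMem_adjoin_simple_of_sq_mem_bot hu hv hun hvn huvn (hw ▸ w.2)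
  · apply restrictScalars_injective k
    rw [adjoin_simple_adjoin_simple, htop, restrictScalars_top]

lemma exists_isQuadraticConj_of_mul_eq {w : L} {m : k} (huv : u * v = algebraMap k L m * w)
    (hu : u ^ 2 ∈ (⊥ : IntermediateField k L)) (hv : v ^ 2 ∈ (⊥ : IntermediateField k L))
    (hun : u ∉ (⊥ : IntermediateField k L)) (hvn : v ∉ (⊥ : IntermediateField k L))
    (hwn : w ∉ (⊥ : IntermediateField k L)) (htop : k⟮u, v⟯ = ⊤) :
    ∃ σ : L ≃ₐ[k⟮u⟯] L, IsQuadraticConj σ ∧ σ v = -v ∧ σ w = -w := by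
  have huv0 : u * v ≠ 0 := mul_ne_zero (fun h ↦ hun (h ▸ zero_mem _)) fun h ↦ hvn (h ▸ zero_mem _)
  have hw : w = u * v / algebraMap k L m := by
    rw [huv, mul_div_cancel_left₀ _ (left_ne_zero_of_mul (huv ▸ huv0))]
  have huvn : u * v ∉ (⊥ : IntermediateField k L) := fun h ↦
    hwn (hw ▸ div_mem h ((⊥ : IntermediateField k L).algebraMap_mem m))
  obtain ⟨σ, hσ, hσv⟩ :=
    exists_isQuadraticConj_adjoin_simple_apply_eq_neg hu hv hun hvn huvn htop
  have hσu : σ u = u := σ.commutes (AdjoinSimple.gen k u)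
  have hσm : σ (algebraMap k L m) = algebraMap k L m := σ.commutes (algebraMap k k⟮u⟯ m)
  refine ⟨σ, hσ, hσv, ?_⟩
  rw [hw, map_div₀, map_mul, hσu, hσv, hσm, mul_neg, neg_div]

lemma exists_isQuadraticConj_biquadratic [Algebra.IsAlgebraic k L] {x y z : L} {m : k}
    (hxyz : x * y = algebraMap k L m * z) (hx : x ^ 2 ∈ (⊥ : IntermediateField k L))
    (hy : y ^ 2 ∈ (⊥ : IntermediateField k L)) (hz : z ^ 2 ∈ (⊥ : IntermediateField k L))
    (hxn : x ∉ (⊥ : IntermediateField k L)) (hyn : y ∉ (⊥ : IntermediateField k L))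
    (hzn : z ∉ (⊥ : IntermediateField k L)) (htop : k⟮x, y⟯ = ⊤) :
    ∃ (σ₁ : L ≃ₐ[k⟮x⟯] L) (σ₂ : L ≃ₐ[k⟮y⟯] L) (σ₃ : L ≃ₐ[k⟮z⟯] L),
      (IsQuadraticConj σ₁ ∧ IsQuadraticConj σ₂ ∧ IsQuadraticConj σ₃) ∧
      (σ₁ y = -y ∧ σ₁ z = -z) ∧ (σ₂ x = -x ∧ σ₂ z = -z) ∧ σ₃ x = -x ∧
      ∀ w, σ₂ (σ₁ w) = σ₃ w := by
  obtain ⟨c, hc⟩ := mem_bot.mp hx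
  have hx0 : x ≠ 0 := fun h ↦ hxn (h ▸ zero_mem _)
  have hy0 : y ≠ 0 := fun h ↦ hyn (h ▸ zero_mem _)
  have hm : algebraMap k L m ≠ 0 := left_ne_zero_of_mul (hxyz ▸ mul_ne_zero hx0 hy0)
  have hzxy : z * x = algebraMap k L (c / m) * y := by
    rw [map_div₀, hc]
    field_simp
    linear_combination -hxyz
  have hzx_top : k⟮z, x⟯ = ⊤ := by
    have hx_mem : x ∈ k⟮z, x⟯ := subset_adjoin _ _ (by simp)
    have hz_mem : z ∈ k⟮z, x⟯ := subset_adjoin _ _ (by simp)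
    have hy : y = algebraMap k L m * z / x := by rw [← hxyz, mul_div_cancel_left₀ _ hx0]
    rw [eq_top_iff, ← htop, adjoin_le_iff, Set.pair_subset_iff]
    exact ⟨hx_mem, hy ▸ div_mem (mul_mem (k⟮z, x⟯.algebraMap_mem m) hz_mem) hx_mem⟩
  obtain ⟨σ₁, hσ₁, hσ₁y, hσ₁z⟩ := exists_isQuadraticConj_of_mul_eq hxyz hx hy hxn hyn hzn htop
  obtain ⟨σ₂, hσ₂, hσ₂x, hσ₂z⟩ := exists_isQuadraticConj_of_mul_eq (mul_comm x y ▸ hxyz) hy hx hyn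
    hxn hzn (by rw [Set.pair_comm, htop])
  obtain ⟨σ₃, hσ₃, hσ₃x, hσ₃y⟩ := exists_isQuadraticConj_of_mul_eq hzxy hz hx hzn hxn hyn hzx_top
  refine ⟨σ₁, σ₂, σ₃, ⟨hσ₁, hσ₂, hσ₃⟩, ⟨hσ₁y, hσ₁z⟩, ⟨hσ₂x, hσ₂z⟩, hσ₃x, ?_⟩
  have hσ₁x : σ₁ x = x := σ₁.commutes (AdjoinSimple.gen k x)
  have hσ₂y : σ₂ y = y := σ₂.commutes (AdjoinSimple.gen k y)
  have heq : ((σ₁.restrictScalars k).trans (σ₂.restrictScalars k)).toAlgHom =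
      (σ₃.restrictScalars k).toAlgHom := by
    apply AlgHom.ext_of_adjoin_eq_top (adjoin_eq_top_iff.mp htop)
    rintro _ (rfl | rfl)
    · exact (congrArg σ₂ hσ₁x).trans (hσ₂x.trans hσ₃x.symm)
    · exact ((congrArg σ₂ hσ₁y).trans (by rw [map_neg, hσ₂y])).trans hσ₃y.symm
  exact DFunLike.congr_fun heq

end FieldConj

lemma isQuadraticConj_galRestrict {A K L B : Type*} [CommRing A] [CommRing B] [Field K]
    [Field L] [Algebra A K] [IsFractionRing A K] [Algebra K L] [Algebra A L] [Algebra B L]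
    [IsFractionRing B L] [Algebra A B] [IsScalarTower A K L] [IsScalarTower A B L]
    [IsIntegralClosure B A L] [Algebra.IsAlgebraic K L] {σ : L ≃ₐ[K] L} (hσ : IsQuadraticConj σ) :
    IsQuadraticConj (galRestrict A K L B σ) where
  finrank_eq_two := (IsFractionRing.finrank_eq A K B L).symm.trans hσ.finrank_eq_two
  ne_one h := hσ.ne_one ((galRestrict A K L B).map_eq_one_iff.mp h)

section BiquadraticField

open IntermediateField

lemma notMem_bot_of_sq_eq_mul_prime {F : Type*} [Field F] [CharZero F] {P Q : ℕ} [Fact P.Prime]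
    [Fact Q.Prime] (hPQ : P ≠ Q) {w : F} (hw : w ^ 2 = P * Q) :
    w ∉ (⊥ : IntermediateField ℚ F) := by
  intro hmem
  obtain ⟨r, rfl⟩ := mem_bot.mp hmem
  have hr : ((P * Q : ℕ) : ℚ) = r * r := by
    apply (algebraMap ℚ F).injective
    rw [map_mul, ← sq, hw, map_natCast, Nat.cast_mul]
  exact not_isSquare_mul_of_prime_ne hPQ (Rat.isSquare_natCast_iff.mp ⟨r, hr⟩)

variable {F : Type*} [Field F] [NumberField F]

lemma exists_quadraticRing_sqrt_eq {u : F} {d : ℤ} (hu : u ^ 2 = d)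
    (hn : u ∉ (⊥ : IntermediateField ℚ F)) :
    ∃ A : QuadraticRing (𝓞 ℚ⟮u⟯) d, algebraMap (𝓞 ℚ⟮u⟯) F A.sqrt = u := by
  have hmem : u ^ 2 ∈ (⊥ : IntermediateField ℚ F) := hu ▸ intCast_mem _ d
  obtain ⟨σ, hσ, hσu⟩ := exists_isQuadraticConj_gen_eq_neg hmem hn
  have hsq : AdjoinSimple.gen ℚ u ^ 2 = d := Subtype.ext (by simpa using hu)
  have hintegral : IsIntegral ℤ (AdjoinSimple.gen ℚ u) :=
    .of_pow two_pos (hsq ▸ isIntegral_algebraMap (x := d))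
  let sqrt : 𝓞 ℚ⟮u⟯ := ⟨AdjoinSimple.gen ℚ u, hintegral⟩
  refine ⟨⟨galRestrict ℤ ℚ ℚ⟮u⟯ (𝓞 ℚ⟮u⟯) σ, isQuadraticConj_galRestrict hσ, sqrt, ?_, ?_, ?_⟩, rfl⟩
  · apply FaithfulSMul.algebraMap_injective (𝓞 ℚ⟮u⟯) ℚ⟮u⟯
    rw [map_pow, map_intCast]
    exact hsq
  · exact RingOfIntegers.ext ((algebraMap_galRestrict_apply ℤ σ sqrt).trans hσu)
  · rintro rfl
    rw [Int.cast_zero, sq_eq_zero_iff] at hu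
    exact hn (hu ▸ zero_mem _)

lemma galRestrict_algebraMap_eq_neg {K K' : Type*} [Field K] [NumberField K] [Field K']
    [Algebra K F] [Algebra K' F] (σ : F ≃ₐ[K] F) {a : 𝓞 K'} {b : F}
    (hab : algebraMap (𝓞 K') F a = b) (hb : σ b = -b) :
    galRestrict (𝓞 K) K F (𝓞 F) σ (algebraMap (𝓞 K') (𝓞 F) a) = -algebraMap (𝓞 K') (𝓞 F) a := by
  subst hab
  exact RingOfIntegers.ext ((algebraMap_galRestrict_apply (𝓞 K) σ _).trans hb)

lemma nonempty_biquadraticRing {x y z : F} {d₁ d₂ d₃ : ℤ} {m : ℚ} (hx : x ^ 2 = d₁)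
    (hy : y ^ 2 = d₂) (hz : z ^ 2 = d₃) (hxyz : x * y = algebraMap ℚ F m * z)
    (hxn : x ∉ (⊥ : IntermediateField ℚ F)) (hyn : y ∉ (⊥ : IntermediateField ℚ F))
    (hzn : z ∉ (⊥ : IntermediateField ℚ F)) (htop : ℚ⟮x, y⟯ = ⊤) :
    Nonempty (BiquadraticRing (𝓞 F) (𝓞 ℚ⟮x⟯) (𝓞 ℚ⟮y⟯) (𝓞 ℚ⟮z⟯) d₁ d₂ d₃) := by
  obtain ⟨σ₁, σ₂, σ₃, ⟨hσ₁, hσ₂, hσ₃⟩, ⟨hσ₁y, hσ₁z⟩, ⟨hσ₂x, hσ₂z⟩, hσ₃x, hcomp⟩ :=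
    exists_isQuadraticConj_biquadratic hxyz (hx ▸ intCast_mem _ d₁) (hy ▸ intCast_mem _ d₂)
      (hz ▸ intCast_mem _ d₃) hxn hyn hzn htop
  obtain ⟨A₁, hA₁⟩ := exists_quadraticRing_sqrt_eq hx hxn
  obtain ⟨A₂, hA₂⟩ := exists_quadraticRing_sqrt_eq hy hyn
  obtain ⟨A₃, hA₃⟩ := exists_quadraticRing_sqrt_eq hz hzn
  exact ⟨{
    quad₁ := A₁
    quad₂ := A₂
    quad₃ := A₃
    conj₁ := galRestrict _ _ F _ σ₁
    conj₂ := galRestrict _ _ F _ σ₂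
    conj₃ := galRestrict _ _ F _ σ₃
    isQuadraticConj₁ := isQuadraticConj_galRestrict hσ₁
    isQuadraticConj₂ := isQuadraticConj_galRestrict hσ₂
    isQuadraticConj₃ := isQuadraticConj_galRestrict hσ₃
    conj₁_sqrt₂ := galRestrict_algebraMap_eq_neg σ₁ hA₂ hσ₁y
    conj₁_sqrt₃ := galRestrict_algebraMap_eq_neg σ₁ hA₃ hσ₁z
    conj₂_sqrt₁ := galRestrict_algebraMap_eq_neg σ₂ hA₁ hσ₂x
    conj₂_sqrt₃ := galRestrict_algebraMap_eq_neg σ₂ hA₃ hσ₂z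
    conj₃_sqrt₁ := galRestrict_algebraMap_eq_neg σ₃ hA₁ hσ₃x
    conj₂_conj₁ := fun w ↦ RingOfIntegers.ext <|
      (algebraMap_galRestrict_apply _ σ₂ _).trans <|
        (congrArg σ₂ (algebraMap_galRestrict_apply _ σ₁ w)).trans <|
          (hcomp w).trans (algebraMap_galRestrict_apply _ σ₃ w).symm }⟩

theorem nonempty_sylow_two_classGroup_mulEquiv {p q s : ℕ} [Fact p.Prime] [Fact q.Prime]
    [Fact s.Prime] (H : IsBiquadraticTriple p q s) {x y : F} (hx : x ^ 2 = p * q)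
    (hy : y ^ 2 = p * s) (htop : ℚ⟮x, y⟯ = ⊤) (P : Sylow 2 (ClassGroup (𝓞 F))) :
    Nonempty (P ≃* Multiplicative (ZMod 2) × Multiplicative (ZMod 2)) := by
  have hp0 : (p : F) ≠ 0 := NeZero.ne _
  have hz : (x * y / p) ^ 2 = q * s := by
    field_simp
    linear_combination y ^ 2 * hx + p * q * hy
  have hxyz : x * y = algebraMap ℚ F p * (x * y / p) := by
    rw [map_natCast, mul_div_cancel₀ _ hp0]
  obtain ⟨B⟩ := nonempty_biquadraticRing (d₁ := p * q) (d₂ := p * s) (d₃ := q * s)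
    (by push_cast; exact hx) (by push_cast; exact hy) (by push_cast; exact hz) hxyz
    (notMem_bot_of_sq_eq_mul_prime H.p_ne_q hx) (notMem_bot_of_sq_eq_mul_prime H.p_ne_s hy)
    (notMem_bot_of_sq_eq_mul_prime H.ne hz) htop
  exact B.nonempty_sylow_two_classGroup_mulEquiv H P

end BiquadraticField

namespace biquad

open IntermediateField

lemma ofReal_sqrt_mul_sq (a b : ℕ) : ((Real.sqrt (a * b) : ℝ) : ℂ) ^ 2 = a * b := by
  rw [← Complex.ofReal_pow, Real.sq_sqrt (by positivity)]
  push_cast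
  rfl

instance (p q s : ℕ) : NumberField (biquad p q s) where
  to_finiteDimensional := by
    have hintegral (a b : ℕ) : IsIntegral ℚ ((Real.sqrt (a * b) : ℝ) : ℂ) :=
      .of_pow two_pos (by
        rw [ofReal_sqrt_mul_sq]
        exact_mod_cast isIntegral_algebraMap (R := ℚ) (A := ℂ) (x := a * b))
    apply finiteDimensional_adjoin
    rintro _ (rfl | rfl)
    exacts [hintegral p q, hintegral p s]

lemma exists_sq_eq_sq_eq_adjoin_eq_top (p q s : ℕ) :
    ∃ x y : biquad p q s, x ^ 2 = p * q ∧ y ^ 2 = p * s ∧ ℚ⟮x, y⟯ = ⊤ := by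
  refine ⟨⟨_, subset_adjoin ℚ _ (Set.mem_insert _ _)⟩,
    ⟨_, subset_adjoin ℚ _ (Set.mem_insert_of_mem _ (Set.mem_singleton _))⟩,
    Subtype.ext (ofReal_sqrt_mul_sq p q), Subtype.ext (ofReal_sqrt_mul_sq p s),
    adjoin_eq_top_of_adjoin_image_eq ?_⟩
  rw [Set.image_pair]
  rfl

end biquad

theorem two_class_group_of_biquadratic_general
    (p q s : ℕ) (hp : p.Prime) (hq : q.Prime) (hs : s.Prime) (hqs : q ≠ s)
    (hp8 : p % 8 = 5) (hq4 : q % 4 = 3) (hs4 : s % 4 = 3)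
    (hQRq : IsSquare (p : ZMod q)) (hQRs : IsSquare (p : ZMod s)) :
    ∀ P : Sylow 2 (ClassGroup (𝓞 (biquad p q s))),
      Nonempty ((P : Subgroup (ClassGroup (𝓞 (biquad p q s)))) ≃*
        (Multiplicative (ZMod 2) × Multiplicative (ZMod 2))) := by
  have : Fact p.Prime := ⟨hp⟩
  have : Fact q.Prime := ⟨hq⟩
  have : Fact s.Prime := ⟨hs⟩
  obtain ⟨x, y, hx, hy, htop⟩ := biquad.exists_sq_eq_sq_eq_adjoin_eq_top p q s
  exact nonempty_sylow_two_classGroup_mulEquiv ⟨hp8, hq4, hs4, hqs, hQRq, hQRs⟩ hx hy htop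

theorem two_class_group_of_biquadratic
    (p q s : ℕ) (hp : p.Prime) (hq : q.Prime) (hs : s.Prime)
    (hpq : p ≠ q) (hps : p ≠ s) (hqs : q ≠ s)
    (hp8 : p % 8 = 5) (hq8 : q % 8 = 3) (hs4 : s % 4 = 3)
    (hQRq : IsSquare (p : ZMod q)) (hQRs : IsSquare (p : ZMod s)) :
    ∀ P : Sylow 2 (ClassGroup (𝓞 (biquad p q s))),
      Nonempty ((P : Subgroup (ClassGroup (𝓞 (biquad p q s)))) ≃*
        (Multiplicative (ZMod 2) × Multiplicative (ZMod 2))) :=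
  two_class_group_of_biquadratic_general p q s hp hq hs hqs hp8 (by omega) hs4 hQRq hQRs
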